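/- arXiv:1808.04805 — 2 statements merged into one kernel-verified Lean document; each statement's English description precedes it below -/
import Mathlib

section
/- Let k be a field, n ≥ 1 and d ≥ 1 natural numbers, and let I be a nonzero ideal of k[x_1,…,x_n] generated by polynomials of total degree at most d. Then the saturation of I by the multiplicative set k[x_1]∖{0}, namely the ideal {a ∈ k[x_1,…,x_n] : there exists a nonzero s ∈ k[x_1] with s·a ∈ I}, is generated by polynomials of total degree at most 2^(n·2^(n+3))·d^(n·2^(2n+1)). -/
/-!
Write `A = k[x₁,…,xₙ]`, `I` for the ideal and `J` for its saturation by `k[x₁] ∖ {0}`.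

Linear forms `k̄ → k` applied to coefficients map `I·k̄[x]` to `I` and preserve degree bounds, so it
suffices to treat the algebraic closure (`saturation_descent`). There, two bounds are combined.

*A single multiplier.* There is `f ≠ 0` in `k[x₁]` of degree at most `(4d)^(2^n)` with `f·J ⊆ I`,
so that `J = I : f` (`exists_uniform_multiplier`). More generally, consider a module `N` embedded in
the cokernel of a matrix over `A` with `p` rows, and killed by some nonzero polynomial in an
endomorphism. Over the fraction field of `A` the minimal polynomial of the endomorphism has degree
at most `p`, and its coefficients lie in `k` because it divides a polynomial over `k`; hence some
polynomial of degree at most `p` maps `N` into its `A`-torsion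
(`exists_annihilator_mod_torsion`). A nonzero maximal minor `Δ` becomes monic in the last variable
after a linear change of coordinates (`exists_coordinates`), and taking remainders modulo `Δ`
embeds the torsion into the cokernel of a matrix over a polynomial ring with one variable less
(`torsion_embedding`). Induction on `n` finishes the argument (`exists_annihilator`).

*Syzygies.* By the same elimination, the syzygies of a matrix with entries of bounded degree are
generated by syzygies of bounded degree, which is Hermann's theorem (`syzygies_generated`). The
colon ideal `I : f` consists of the first entries of the syzygies of the row formed by `f` and the
generators of `I`.

The resulting bound `(4·(4d)^(2^n))^(2^n)` is good enough for `d ≥ 2`. For `d = 1` the ideal `I` is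
prime or the unit ideal (`span_linear_eq_top_or_isPrime`), so `J` is `I` or `A`.
-/

/-! ### Maximal minors and Cramer's rule -/

/-- A maximal nonzero minor, with rows `L` and columns `j`; the remaining rows of `G` depend on the
rows `L`. The index maps may be taken arbitrary, as a nonzero minor forces them to be injective. -/
theorem exists_rank_minor {A ι γ : Type*} [CommRing A] [IsDomain A] [Fintype ι] [Fintype γ]
    (G : Matrix ι γ A) :
    ∃ r ≤ Fintype.card ι, ∃ (L : Fin r → ι) (j : Fin r → γ), (G.submatrix L j).det ≠ 0 ∧
      ∀ c : γ → A, (∀ a, (G.mulVec c) (L a) = 0) → G.mulVec c = 0 := by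
  classical
  let P : ℕ → Prop := fun r => ∃ (L : Fin r → ι) (j : Fin r → γ), (G.submatrix L j).det ≠ 0
  have hP0 : P 0 := ⟨Fin.elim0, Fin.elim0, by simp⟩
  have hbd : ∀ r, P r → r ≤ Fintype.card ι := by
    rintro r ⟨L, j, h⟩
    have hL : Function.Injective L := by
      intro a b hab
      by_contra hne
      exact h (Matrix.det_zero_of_row_eq hne (by ext i; simp [hab]))
    simpa using Fintype.card_le_of_injective L hL
  set r := Nat.findGreatest P (Fintype.card ι) with hr
  have hPr : P r := Nat.findGreatest_spec (P := P) (Nat.zero_le _) hP0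
  have hmax : ¬ P (r + 1) := fun h => by
    have := Nat.le_findGreatest (hbd _ h) h
    omega
  obtain ⟨L, j, hdet⟩ := hPr
  refine ⟨r, Nat.findGreatest_le _, L, j, hdet, fun c hc => ?_⟩
  set H := G.submatrix L j with hH
  -- Every column, scaled by the minor, is a combination of the chosen columns.
  have key : ∀ i l, H.det * G l i = ∑ b, (H.adjugate.mulVec (fun a => G (L a) i)) b * G l (j b) := by
    intro i l
    have h0 : (G.submatrix (Fin.cons l L : Fin (r + 1) → ι)
        (Fin.cons i j : Fin (r + 1) → γ)).det = 0 := by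
      by_contra h
      exact hmax ⟨_, _, h⟩
    obtain ⟨v, hv, hv0⟩ := Matrix.exists_mulVec_eq_zero_iff.2 h0
    have e0 : G l i * v 0 + ∑ b, G l (j b) * v b.succ = 0 := by
      have := congrFun hv0 0
      simpa [Matrix.mulVec, dotProduct, Fin.sum_univ_succ] using this
    have e1 : H.mulVec (fun b => v b.succ) = -(v 0 • fun a => G (L a) i) := by
      ext a
      have := congrFun hv0 a.succ
      simp [Matrix.mulVec, dotProduct, Fin.sum_univ_succ] at this
      simp [Matrix.mulVec, dotProduct, hH]
      linear_combination this
    have e2 : ∀ b, H.det * v b.succ = -(v 0 * (H.adjugate.mulVec (fun a => G (L a) i)) b) := by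
      intro b
      have := congrArg (fun w => H.adjugate.mulVec w b) e1
      simpa [Matrix.mulVec_mulVec, Matrix.adjugate_mul, Matrix.smul_mulVec, Matrix.mulVec_neg,
        Matrix.mulVec_smul] using this
    have hv0' : v 0 ≠ 0 := by
      intro h
      apply hv
      have : ∀ b : Fin r, v b.succ = 0 := fun b => by
        have := e2 b
        rw [h] at this
        simpa [hdet] using this
      ext b
      refine Fin.cases h this b
    apply mul_left_cancel₀ hv0'
    rw [Finset.mul_sum]
    have : ∀ b, v 0 * ((H.adjugate.mulVec (fun a => G (L a) i)) b * G l (j b)) =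
        - (H.det * (G l (j b) * v b.succ)) := fun b => by
      linear_combination (G l (j b)) * e2 b
    simp_rw [this]
    rw [Finset.sum_neg_distrib, ← Finset.mul_sum]
    linear_combination H.det * e0
  ext l
  apply mul_left_cancel₀ hdet
  have h1 : H.det * (G.mulVec c) l =
      ∑ b, (H.adjugate.mulVec (fun a => (G.mulVec c) (L a))) b * G l (j b) := by
    simp only [Matrix.mulVec, dotProduct, Finset.mul_sum, Finset.sum_mul]
    calc ∑ i, H.det * (G l i * c i) = ∑ i, (∑ b, (H.adjugate.mulVec (fun a => G (L a) i)) b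
            * G l (j b)) * c i := by
          refine Finset.sum_congr rfl fun i _ => ?_
          rw [← key]; ring
      _ = _ := by
          simp only [Matrix.mulVec, dotProduct, Finset.sum_mul]
          rw [Finset.sum_comm]
          refine Finset.sum_congr rfl fun b _ => ?_
          rw [Finset.sum_comm]
          refine Finset.sum_congr rfl fun a _ => Finset.sum_congr rfl fun i _ => ?_
          ring
  rw [h1]
  have : (fun a => (G.mulVec c) (L a)) = 0 := funext hc
  simp [this]

open Polynomial in
theorem natDegree_det_le_mul {R : Type*} [CommRing R] {r d : ℕ} (M : Matrix (Fin r) (Fin r) R[X])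
    (h : ∀ i j, (M i j).natDegree ≤ d) : M.det.natDegree ≤ r * d := by
  rw [Matrix.det_apply]
  refine Polynomial.natDegree_sum_le_of_forall_le _ _ fun σ _ => ?_
  refine (Polynomial.natDegree_smul_le _ _).trans ?_
  refine (Polynomial.natDegree_prod_le _ _).trans ?_
  refine (Finset.sum_le_card_nsmul _ _ d fun i _ => h _ _).trans ?_
  simp

theorem totalDegree_det_le_mul {k σ : Type*} [CommRing k] {r d : ℕ}
    (M : Matrix (Fin r) (Fin r) (MvPolynomial σ k))
    (h : ∀ i j, (M i j).totalDegree ≤ d) : M.det.totalDegree ≤ r * d := by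
  rw [Matrix.det_apply]
  refine MvPolynomial.totalDegree_finsetSum_le fun σ _ => ?_
  refine (MvPolynomial.totalDegree_smul_le _ _).trans ?_
  refine (MvPolynomial.totalDegree_finsetProd _ _).trans ?_
  refine (Finset.sum_le_card_nsmul _ _ d fun i _ => h _ _).trans ?_
  simp

open Polynomial in
theorem natDegree_adjugate_le_mul {R : Type*} [CommRing R] {r d : ℕ}
    (M : Matrix (Fin r) (Fin r) R[X])
    (h : ∀ i j, (M i j).natDegree ≤ d) (a b : Fin r) : (M.adjugate a b).natDegree ≤ r * d := by
  rw [Matrix.adjugate_apply]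
  refine natDegree_det_le_mul _ fun i j => ?_
  rw [Matrix.updateRow_apply]
  split_ifs
  · rw [Pi.single_apply]; split_ifs <;> simp
  · exact h _ _

theorem totalDegree_adjugate_le_mul {k σ : Type*} [CommRing k] {r d : ℕ}
    (M : Matrix (Fin r) (Fin r) (MvPolynomial σ k))
    (h : ∀ i j, (M i j).totalDegree ≤ d) (a b : Fin r) :
    (M.adjugate a b).totalDegree ≤ r * d := by
  rw [Matrix.adjugate_apply]
  refine totalDegree_det_le_mul _ fun i j => ?_
  rw [Matrix.updateRow_apply]
  split_ifs
  · rw [Pi.single_apply]; split_ifs <;> simp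
  · exact h _ _

section Cramer

variable {A γ : Type*} [CommRing A] [DecidableEq γ] {r : ℕ}

/-- Extension by zero along `j` (values at coinciding indices are added). -/
def spread (j : Fin r → γ) (v : Fin r → A) : γ → A := ∑ b, Pi.single (j b) (v b)

theorem spread_apply (j : Fin r → γ) (v : Fin r → A) (i : γ) :
    spread j v i = ∑ b, if i = j b then v b else 0 := by
  simp [spread, Pi.single_apply]

theorem mulVec_spread [Fintype γ] {ι : Type*} (G : Matrix ι γ A) (j : Fin r → γ) (v : Fin r → A) :
    G.mulVec (spread j v) = (G.submatrix id j).mulVec v := by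
  ext l
  simp only [Matrix.mulVec, dotProduct, spread_apply, Finset.mul_sum, mul_ite, mul_zero,
    Matrix.submatrix_apply, id]
  rw [Finset.sum_comm]
  simp

/-- The syzygies of `G` provided by Cramer's rule for the square block of columns `j`. -/
def cramerSyz [Fintype γ] (G : Matrix (Fin r) γ A) (j : Fin r → γ) (Q : γ → A) : γ → A :=
  (G.submatrix id j).det • Q - spread j ((G.submatrix id j).adjugate.mulVec (G.mulVec Q))

theorem mulVec_cramerSyz [Fintype γ] (G : Matrix (Fin r) γ A) (j : Fin r → γ) (Q : γ → A) :
    G.mulVec (cramerSyz G j Q) = 0 := by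
  rw [cramerSyz, Matrix.mulVec_sub, mulVec_spread, Matrix.mulVec_mulVec, Matrix.mul_adjugate,
    Matrix.mulVec_smul, Matrix.smul_mulVec, Matrix.one_mulVec, sub_self]

theorem cramerSyz_eq_sum [Fintype γ] (G : Matrix (Fin r) γ A) (j : Fin r → γ) (Q : γ → A) :
    cramerSyz G j Q = ∑ i, Q i • cramerSyz G j (Pi.single i 1) := by
  let f : (γ → A) →ₗ[A] (γ → A) :=
    { toFun := cramerSyz G j
      map_add' := fun v w => by
        ext i
        simp only [cramerSyz, spread_apply, Matrix.mulVec_add, Pi.sub_apply, Pi.add_apply,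
          smul_add, ite_add_zero, Finset.sum_add_distrib]
        ring
      map_smul' := fun a v => by
        ext i
        simp only [cramerSyz, spread_apply, Matrix.mulVec_smul, Pi.sub_apply, Pi.smul_apply,
          smul_eq_mul, RingHom.id_apply, mul_sub, Finset.mul_sum, mul_ite, mul_zero]
        ring }
  have h : f Q = ∑ i, Q i • f (Pi.single i 1) := by
    conv_lhs => rw [pi_eq_sum_univ' Q, map_sum]
    simp_rw [map_smul]
  exact h

end Cramer

open Polynomial in
/-- Division by a minor with unit leading coefficient, followed by Cramer's rule: modulo the
syzygies `cramerSyz`, a coefficient vector producing a vector of small degree can be replaced by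
one of small degree. -/
theorem exists_reduced {R γ : Type*} [CommRing R] [IsDomain R] [Fintype γ] [DecidableEq γ]
    {r d : ℕ} (G : Matrix (Fin r) γ R[X]) (j : Fin r → γ) (hG : ∀ l i, (G l i).natDegree ≤ d)
    (hu : IsUnit (G.submatrix id j).det.leadingCoeff) (c : γ → R[X])
    (hc : ∀ l, (G.mulVec c l).natDegree ≤ (G.submatrix id j).det.natDegree) :
    ∃ Q : γ → R[X], ∀ i, ((c - cramerSyz G j Q) i).natDegree ≤ (r + 1) * d := by
  set H := G.submatrix id j with hH
  set D := H.det.natDegree with hD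
  have hH' : ∀ a b, (H a b).natDegree ≤ d := fun a b => hG _ _
  have hDle : D ≤ r * d := natDegree_det_le_mul H hH'
  obtain ⟨u, hu'⟩ := hu
  have hdet0 : H.det ≠ 0 := by
    intro h
    rw [h, leadingCoeff_zero] at hu'
    exact u.ne_zero hu'
  set m : R[X] := C (↑u⁻¹ : R) * H.det with hm
  have hmon : m.Monic := by
    rw [hm]
    exact monic_C_mul_of_mul_leadingCoeff_eq_one (by rw [← hu']; simp)
  have hmD : m.natDegree = D := by
    rw [hm]; exact natDegree_C_mul (Units.ne_zero _)
  let Q : γ → R[X] := fun i => C (↑u⁻¹ : R) * (c i /ₘ m)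
  let rem : γ → R[X] := fun i => c i %ₘ m
  have hrem : ∀ i, (rem i).natDegree ≤ D := fun i => by
    rw [← hmD]; exact natDegree_modByMonic_le _ hmon
  have hdiv : c = H.det • Q + rem := by
    ext1 i
    have := modByMonic_add_div (c i) m
    simp only [Pi.add_apply, Pi.smul_apply, smul_eq_mul, Q, rem]
    conv_lhs => rw [← this, hm]
    ring
  set h := H.adjugate.mulVec (G.mulVec Q) with hh
  have hHh : H.mulVec h = G.mulVec c - G.mulVec rem := by
    rw [hh, Matrix.mulVec_mulVec, Matrix.mul_adjugate, Matrix.smul_mulVec, Matrix.one_mulVec]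
    conv_rhs => rw [hdiv]
    rw [Matrix.mulVec_add, Matrix.mulVec_smul]
    simp
  have hdeg1 : ∀ l, ((G.mulVec c - G.mulVec rem) l).natDegree ≤ D + d := by
    intro l
    refine (natDegree_sub_le _ _).trans (max_le ((hc l).trans (by omega)) ?_)
    refine natDegree_sum_le_of_forall_le _ _ fun i _ => ?_
    refine natDegree_mul_le.trans ?_
    exact (add_le_add (hG l i) (hrem i)).trans (by omega)
  have hdh : H.det • h = H.adjugate.mulVec (G.mulVec c - G.mulVec rem) := by
    rw [← hHh, Matrix.mulVec_mulVec, Matrix.adjugate_mul, Matrix.smul_mulVec, Matrix.one_mulVec]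
  have hhdeg : ∀ b, (h b).natDegree ≤ (r + 1) * d := by
    intro b
    by_cases hb : h b = 0
    · simp [hb]
    have h1 : (H.det * h b).natDegree ≤ r * d + (D + d) := by
      have := congrFun hdh b
      rw [Pi.smul_apply, smul_eq_mul] at this
      rw [this, Matrix.mulVec, dotProduct]
      refine natDegree_sum_le_of_forall_le _ _ fun i _ => ?_
      exact natDegree_mul_le.trans (add_le_add (natDegree_adjugate_le_mul H hH' _ _) (hdeg1 i))
    rw [natDegree_mul hdet0 hb] at h1
    rw [add_mul]
    omega
  refine ⟨Q, fun i => ?_⟩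
  have : c - cramerSyz G j Q = rem + spread j h := by
    rw [cramerSyz, ← hH, ← hh]
    conv_lhs => rw [hdiv]
    abel
  rw [this, Pi.add_apply, spread_apply]
  refine (natDegree_add_le _ _).trans (max_le ((hrem i).trans ?_) ?_)
  · rw [add_mul]; omega
  · refine natDegree_sum_le_of_forall_le _ _ fun b _ => ?_
    split_ifs
    · exact hhdeg b
    · simp

/-! ### Linear changes of coordinates -/

open MvPolynomial in
theorem totalDegree_aeval_le {k σ τ : Type*} [CommRing k] (f : σ → MvPolynomial τ k)
    (hf : ∀ i, (f i).totalDegree ≤ 1) (a : MvPolynomial σ k) :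
    (aeval f a).totalDegree ≤ a.totalDegree := by
  rw [aeval_def, eval₂_eq]
  refine totalDegree_finsetSum_le fun m hm => ?_
  refine (totalDegree_mul _ _).trans ?_
  have h1 : (∏ i ∈ m.support, f i ^ m i).totalDegree ≤ m.sum fun _ e => e := by
    refine (totalDegree_finsetProd _ _).trans ?_
    refine Finset.sum_le_sum fun i _ => ?_
    refine (totalDegree_pow _ _).trans ?_
    calc m i * (f i).totalDegree ≤ m i * 1 := Nat.mul_le_mul_left _ (hf i)
      _ = m i := mul_one _
  have h2 : (algebraMap k (MvPolynomial τ k) (coeff m a)).totalDegree = 0 := by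
    rw [algebraMap_eq, totalDegree_C]
  rw [h2, zero_add]
  exact h1.trans (le_totalDegree hm)

open MvPolynomial in
/-- Along the line through the origin in direction `c`, the coefficient of degree `D` is the value
at `c` of the homogeneous component of degree `D`. -/
theorem coeff_aeval_C_mul_X {k σ : Type*} [CommRing k] (c : σ → k) (a : MvPolynomial σ k) (D : ℕ) :
    (aeval (fun i => Polynomial.C (c i) * Polynomial.X) a : Polynomial k).coeff D =
      eval c (homogeneousComponent D a) := by
  induction a using MvPolynomial.induction_on' with
  | monomial m r =>
    have h : (aeval (fun i => Polynomial.C (c i) * Polynomial.X) (monomial m r) : Polynomial k) =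
        Polynomial.C (r * m.prod fun i e => c i ^ e) * Polynomial.X ^ m.degree := by
      rw [aeval_monomial]
      simp only [mul_pow, Finsupp.prod_mul]
      rw [Finsupp.degree]
      simp only [Finsupp.prod, Finset.prod_pow_eq_pow_sum, map_mul, map_prod, map_pow]
      rw [← mul_assoc]; rfl
    rw [h, Polynomial.coeff_C_mul, Polynomial.coeff_X_pow]
    by_cases hD : D = m.degree
    · have : homogeneousComponent D (monomial m r) = monomial m r :=
        homogeneousComponent_eq_self (isHomogeneous_monomial r hD.symm)
      rw [this, eval_monomial]; simp [hD]
    · have : homogeneousComponent D (monomial m r) = 0 := by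
        rw [homogeneousComponent_of_mem (isHomogeneous_monomial r rfl : (monomial m r).IsHomogeneous _),
          if_neg hD]
      rw [this]; simp [hD]
  | add p q hp hq => simp [hp, hq]

open MvPolynomial in
theorem finSuccEquiv_rename_succ {k : Type*} [CommRing k] {n : ℕ} (b : MvPolynomial (Fin n) k) :
    finSuccEquiv k n (rename Fin.succ b) = Polynomial.C b := by
  induction b using MvPolynomial.induction_on with
  | C r => simp [finSuccEquiv_apply]
  | add p q hp hq => simp [hp, hq]
  | mul_X p i hp => simp [hp, finSuccEquiv_X_succ]

open MvPolynomial in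
/-- Over an infinite field, a linear change of coordinates makes a given nonzero polynomial have
unit leading coefficient in the distinguished variable. -/
theorem exists_coordinates {k : Type*} [Field k] [Infinite k] {n : ℕ}
    (a : MvPolynomial (Fin (n + 1)) k) (ha : a ≠ 0) :
    ∃ θ : MvPolynomial (Fin (n + 1)) k ≃ₐ[k] Polynomial (MvPolynomial (Fin n) k),
      (∀ b, (θ b).natDegree ≤ b.totalDegree) ∧
      (∀ b t, ((θ b).coeff t).totalDegree ≤ b.totalDegree) ∧
      (∀ b t, (θ.symm (Polynomial.C b * Polynomial.X ^ t)).totalDegree ≤ b.totalDegree + t) ∧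
      IsUnit (θ a).leadingCoeff := by
  set D := a.totalDegree with hD
  have htop : homogeneousComponent D a ≠ 0 := by
    intro h
    have hne : a.support.Nonempty := by rwa [Finset.nonempty_iff_ne_empty, ne_eq, support_eq_empty]
    obtain ⟨m, hm, hm'⟩ := Finset.exists_mem_eq_sup a.support hne (fun s => s.sum fun _ e => e)
    have hmD : m.degree = D := hm'.symm
    have := congrArg (coeff m) h
    rw [coeff_homogeneousComponent, if_pos hmD, coeff_zero] at this
    exact (mem_support_iff.1 hm) this
  -- The top homogeneous part of `a` does not vanish at `c`; the factor `X 0` forces `c 0 ≠ 0`, so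
  -- that the substitution `f` below is invertible.
  obtain ⟨c, hc⟩ : ∃ c : Fin (n + 1) → k, eval c (homogeneousComponent D a * X 0) ≠ 0 := by
    by_contra! h
    have : homogeneousComponent D a * X 0 = 0 := MvPolynomial.funext fun x => by simpa using h x
    exact (mul_ne_zero htop (X_ne_zero _)) this
  rw [map_mul, eval_X] at hc
  have hc0 : c 0 ≠ 0 := right_ne_zero_of_mul hc
  have hcD : eval c (homogeneousComponent D a) ≠ 0 := left_ne_zero_of_mul hc
  let f : Fin (n + 1) → MvPolynomial (Fin (n + 1)) k :=
    Fin.cons (C (c 0) * X 0) fun i => X i.succ + C (c i.succ) * X 0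
  let f' : Fin (n + 1) → MvPolynomial (Fin (n + 1)) k :=
    Fin.cons (C (c 0)⁻¹ * X 0) fun i => X i.succ - C (c i.succ * (c 0)⁻¹) * X 0
  have hCX : ∀ r : k, (C r * X 0 : MvPolynomial (Fin (n + 1)) k).totalDegree ≤ 1 := fun r =>
    (totalDegree_mul _ _).trans (by simp)
  have hf : ∀ i, (f i).totalDegree ≤ 1 := fun i => by
    refine Fin.cases (hCX _) (fun i => ?_) i
    exact (totalDegree_add _ _).trans (max_le (by simp) (hCX _))
  have hf' : ∀ i, (f' i).totalDegree ≤ 1 := fun i => by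
    refine Fin.cases (hCX _) (fun i => ?_) i
    exact (totalDegree_sub _ _).trans (max_le (by simp) (hCX _))
  have hCC : (C (c 0) * C (c 0)⁻¹ : MvPolynomial (Fin (n + 1)) k) = 1 := by
    rw [← C_mul, mul_inv_cancel₀ hc0, C_1]
  let σ : MvPolynomial (Fin (n + 1)) k ≃ₐ[k] MvPolynomial (Fin (n + 1)) k :=
    AlgEquiv.ofAlgHom (aeval f) (aeval f')
      (by
        ext1 i
        refine Fin.cases ?_ (fun i => ?_) i
        · simp only [AlgHom.comp_apply, aeval_X, f', f, Fin.cons_zero, map_mul, AlgHom.id_apply, algHom_C, algebraMap_eq]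
          linear_combination (X 0) * hCC
        · simp only [AlgHom.comp_apply, aeval_X, f', f, Fin.cons_zero, Fin.cons_succ, map_mul, map_sub, AlgHom.id_apply, algHom_C, algebraMap_eq]
          linear_combination (-C (c i.succ) * X 0) * hCC)
      (by
        ext1 i
        refine Fin.cases ?_ (fun i => ?_) i
        · simp only [AlgHom.comp_apply, aeval_X, f', f, Fin.cons_zero, map_mul, AlgHom.id_apply, algHom_C, algebraMap_eq]
          linear_combination (X 0) * hCC
        · simp only [AlgHom.comp_apply, aeval_X, f', f, Fin.cons_zero, Fin.cons_succ, map_mul, map_add, AlgHom.id_apply, algHom_C, algebraMap_eq]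
          ring)
  have hσ : ∀ b, (σ b).totalDegree ≤ b.totalDegree := totalDegree_aeval_le f hf
  have hσ' : ∀ b, (σ.symm b).totalDegree ≤ b.totalDegree := totalDegree_aeval_le f' hf'
  have hnat : ∀ b, ((finSuccEquiv k n) (σ b)).natDegree ≤ b.totalDegree := fun b => by
    rw [natDegree_finSuccEquiv]
    exact (degreeOf_le_totalDegree _ _).trans (hσ b)
  refine ⟨σ.trans (finSuccEquiv k n), hnat, fun b t => ?_, fun b t => ?_, ?_⟩
  · by_cases h : ((finSuccEquiv k n) (σ b)).coeff t = 0
    · simp [h]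
    · have := totalDegree_coeff_finSuccEquiv_add_le (σ b) t h
      have := hσ b
      simp only [AlgEquiv.trans_apply]
      omega
  · have h1 : (finSuccEquiv k n).symm (Polynomial.C b * Polynomial.X ^ t) =
        rename Fin.succ b * X 0 ^ t := by
      rw [AlgEquiv.symm_apply_eq, map_mul, map_pow, finSuccEquiv_X_zero, finSuccEquiv_rename_succ]
    rw [AlgEquiv.symm_trans_apply, h1]
    refine (hσ' _).trans ((totalDegree_mul _ _).trans (add_le_add (totalDegree_rename_le _ _) ?_))
    refine (totalDegree_pow _ _).trans (by simp)
  · set p := (finSuccEquiv k n) (σ a) with hp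
    -- Restricted to the line `x₁ = … = xₙ = 0`, the new polynomial is `a (c 0 * t, …, c n * t)`,
    -- whose coefficient of `t ^ D` is the value at `c` of the top homogeneous part of `a`.
    have hcomp : ∀ b, Polynomial.mapAlgHom (aeval (0 : Fin n → k)) (finSuccEquiv k n (σ b)) =
        (aeval (fun i => Polynomial.C (c i) * Polynomial.X) b : Polynomial k) := by
      intro b
      have : ((Polynomial.mapAlgHom (aeval (0 : Fin n → k))).comp
          (finSuccEquiv k n).toAlgHom).comp (aeval f) =
          (aeval (fun i => Polynomial.C (c i) * Polynomial.X) : _ →ₐ[k] Polynomial k) := by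
        ext1 i
        refine Fin.cases ?_ (fun i => ?_) i
        · simp [f, finSuccEquiv_apply]
        · simp [f, finSuccEquiv_apply]
      exact DFunLike.congr_fun this b
    have hcoef : (p.coeff D) ≠ 0 := by
      intro h
      apply hcD
      rw [← coeff_aeval_C_mul_X, ← hcomp, ← hp]
      simp [h]
    have hpD : p.natDegree = D := le_antisymm (hnat a) (Polynomial.le_natDegree_of_ne_zero hcoef)
    have hdeg0 : (p.coeff D).totalDegree = 0 := by
      have := totalDegree_coeff_finSuccEquiv_add_le (σ a) D hcoef
      have := hσ a
      rw [← hp] at *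
      omega
    rw [AlgEquiv.trans_apply, ← hp, Polynomial.leadingCoeff, hpD]
    rw [totalDegree_eq_zero_iff_eq_C.1 hdeg0] at hcoef ⊢
    refine (IsUnit.mk0 _ ?_).map C
    rintro h
    rw [h] at hcoef
    simp at hcoef

/-! ### Eliminating one variable, and syzygies -/

section Prolong

open Polynomial

variable {R γ : Type*} [CommRing R] {r : ℕ}

/-- The matrix over `R` of multiplication by `G` on polynomial vectors with coefficients in degrees
`< s`, where the values are recorded through their coefficients in degrees `< e`. -/
noncomputable def prolong (G : Matrix (Fin r) γ R[X]) (s e : ℕ) : Matrix (Fin r × Fin e) (γ × Fin s) R :=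
  Matrix.of fun x y => (G x.1 y.1 * X ^ (y.2 : ℕ)).coeff x.2

/-- The polynomial vector with prescribed coefficients in degrees `< s`. -/
noncomputable def assemble {s : ℕ} (v : γ × Fin s → R) : γ → R[X] := fun i => ∑ t, C (v (i, t)) * X ^ (t : ℕ)

theorem prolong_mulVec [Fintype γ] (G : Matrix (Fin r) γ R[X]) (s e : ℕ) (v : γ × Fin s → R)
    (x : Fin r × Fin e) :
    (prolong G s e).mulVec v x = (G.mulVec (assemble v) x.1).coeff x.2 := by
  simp only [Matrix.mulVec, dotProduct, prolong, Matrix.of_apply, assemble, Fintype.sum_prod_type,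
    finsetSum_coeff, Finset.mul_sum]
  refine Finset.sum_congr rfl fun i _ => Finset.sum_congr rfl fun t _ => ?_
  rw [show G x.1 i * (C (v (i, t)) * X ^ (t : ℕ)) = C (v (i, t)) * (G x.1 i * X ^ (t : ℕ)) by ring,
    coeff_C_mul, mul_comm]

theorem assemble_coeff {s : ℕ} (c : γ → R[X]) (hc : ∀ i, (c i).natDegree ≤ s) :
    assemble (fun y : γ × Fin (s + 1) => (c y.1).coeff y.2) = c := by
  ext1 i
  rw [(c i).as_sum_range_C_mul_X_pow' (Nat.lt_succ_of_le (hc i)), assemble]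
  rw [Finset.sum_range]

theorem natDegree_assemble_le {s : ℕ} (v : γ × Fin (s + 1) → R) (i : γ) :
    (assemble v i).natDegree ≤ s := by
  refine natDegree_sum_le_of_forall_le _ _ fun t _ => ?_
  exact (natDegree_C_mul_X_pow_le _ _).trans (by omega)

/-- If enough coefficients are recorded, then the prolonged matrix loses no information. -/
theorem mulVec_assemble_eq_of_coeff [Fintype γ] {d s : ℕ} (G : Matrix (Fin r) γ R[X])
    (hG : ∀ l i, (G l i).natDegree ≤ d) (v : γ × Fin (s + 1) → R) (w : Fin r → R[X])
    (hw : ∀ l, (w l).natDegree ≤ s + d)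
    (h : ∀ x, (prolong G (s + 1) (s + d + 1)).mulVec v x = (w x.1).coeff x.2) :
    G.mulVec (assemble v) = w := by
  ext l t
  by_cases ht : t < s + d + 1
  · rw [← h (l, ⟨t, ht⟩), prolong_mulVec]
  · rw [coeff_eq_zero_of_natDegree_lt (lt_of_le_of_lt (hw l) (by omega)),
      coeff_eq_zero_of_natDegree_lt]
    refine lt_of_le_of_lt (natDegree_sum_le_of_forall_le (n := s + d) _ _ fun i _ => ?_) (by omega)
    refine natDegree_mul_le.trans ?_
    exact (add_le_add (hG l i) (natDegree_assemble_le v i)).trans (by omega)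

end Prolong

/-- Number of rows of the matrix obtained after eliminating one variable. -/
def stepSize (d p : ℕ) : ℕ := p * ((p + 1) * d + d + 1)

/-- Degree bound for generators of the syzygies of a matrix with `p` rows and entries of degree at
most `d` in `n` variables. -/
def syzBound (d : ℕ) : ℕ → ℕ → ℕ
  | 0, _ => 0
  | n + 1, p => (p + 1) * d + syzBound d n (stepSize d p)

theorem map_mulVec' {A B ι γ : Type*} [CommRing A] [CommRing B] [Fintype γ] (θ : A →+* B)
    (G : Matrix ι γ A) (c : γ → A) (l : ι) :
    θ (G.mulVec c l) = (G.map θ).mulVec (fun i => θ (c i)) l := by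
  simp [Matrix.mulVec, dotProduct]

theorem cramerSyz_map {A B γ : Type*} [CommRing A] [CommRing B] [Fintype γ] [DecidableEq γ]
    {r : ℕ} (θ : A →+* B) (G : Matrix (Fin r) γ A) (j : Fin r → γ) (Q : γ → A) (i : γ) :
    θ (cramerSyz G j Q i) = cramerSyz (G.map θ) j (fun i => θ (Q i)) i := by
  have h1 : ((G.map θ).submatrix id j) = θ.mapMatrix (G.submatrix id j) := rfl
  simp only [cramerSyz, Pi.sub_apply, Pi.smul_apply, spread_apply, smul_eq_mul, map_sub, map_mul,
    map_sum, h1, ← RingHom.map_det, ← RingHom.map_adjugate]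
  congr 1
  refine Finset.sum_congr rfl fun b _ => ?_
  split_ifs
  · rw [map_mulVec']
    simp_rw [map_mulVec']
    rfl
  · simp

open MvPolynomial in
/-- Hermann's bound: the syzygies of a matrix over a polynomial ring in `n` variables are generated
by syzygies of bounded degree. -/
theorem syzygies_generated {k : Type*} [Field k] [Infinite k] (d n : ℕ) :
    ∀ {ι : Type} {γ : Type _} [Fintype ι] [Fintype γ] [DecidableEq γ] (p : ℕ)
      (_ : Fintype.card ι ≤ p)
      (G : Matrix ι γ (MvPolynomial (Fin n) k)) (_ : ∀ l i, (G l i).totalDegree ≤ d)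
      (c : γ → MvPolynomial (Fin n) k) (_ : G.mulVec c = 0),
      c ∈ Submodule.span (MvPolynomial (Fin n) k)
        {c' | G.mulVec c' = 0 ∧ ∀ i, (c' i).totalDegree ≤ syzBound d n p} := by
  induction n with
  | zero =>
    intro ι γ _ _ _ p hp G hG c hc
    refine Submodule.subset_span ⟨hc, fun i => ?_⟩
    rw [MvPolynomial.eq_C_of_isEmpty (c i)]
    simp
  | succ n ih =>
    intro ι γ _ _ _ p hp G hG c hc
    obtain ⟨r, hr, L, j, hdet, hinj⟩ := exists_rank_minor G
    obtain ⟨θ, hθ1, hθ2, hθ3, hu⟩ := exists_coordinates _ hdet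
    have hrp : r ≤ p := hr.trans hp
    set GR : Matrix (Fin r) γ (MvPolynomial (Fin (n + 1)) k) := G.submatrix L id with hGR
    have hGRG : ∀ c, GR.mulVec c = 0 → G.mulVec c = 0 := fun c h => hinj c fun a => congrFun h a
    have hGGR : ∀ c, G.mulVec c = 0 → GR.mulVec c = 0 := fun c h => funext fun a => congrFun h (L a)
    let Gθ : Matrix (Fin r) γ (Polynomial (MvPolynomial (Fin n) k)) := GR.map
      (θ : MvPolynomial (Fin (n + 1)) k →+* Polynomial (MvPolynomial (Fin n) k))
    have hGθd : ∀ l i, (Gθ l i).natDegree ≤ d := fun l i => (hθ1 _).trans (hG _ _)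
    have hdetθ : (Gθ.submatrix id j).det = θ (G.submatrix L j).det :=
      (RingHom.map_det (θ : MvPolynomial (Fin (n + 1)) k →+* Polynomial (MvPolynomial (Fin n) k))
        (G.submatrix L j)).symm
    set B := syzBound d (n + 1) p with hB
    set W := Submodule.span (MvPolynomial (Fin (n + 1)) k)
        {c' | G.mulVec c' = 0 ∧ ∀ i, (c' i).totalDegree ≤ B} with hW
    have hrd : (r + 1) * d ≤ B :=
      (Nat.mul_le_mul_right d (Nat.succ_le_succ hrp)).trans (Nat.le_add_right _ _)
    have hcramer : ∀ Q : γ → MvPolynomial (Fin (n + 1)) k, cramerSyz GR j Q ∈ W := by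
      intro Q
      have hlin : cramerSyz GR j Q = ∑ i, Q i • cramerSyz GR j (Pi.single i 1) :=
        cramerSyz_eq_sum GR j Q
      rw [hlin]
      refine Submodule.sum_mem _ fun i _ => Submodule.smul_mem _ _ (Submodule.subset_span
        ⟨hGRG _ (mulVec_cramerSyz _ _ _), fun l => ?_⟩)
      refine le_trans ?_ hrd
      have hH : ∀ a b, (GR.submatrix id j a b).totalDegree ≤ d := fun a b => hG _ _
      rw [cramerSyz, Pi.sub_apply, Pi.smul_apply, spread_apply, smul_eq_mul]
      refine (totalDegree_sub _ _).trans (max_le ?_ ?_)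
      · rw [Pi.single_apply]
        split_ifs
        · rw [mul_one]
          exact (totalDegree_det_le_mul _ hH).trans (Nat.mul_le_mul_right d (Nat.le_succ r))
        · simp
      · refine totalDegree_finsetSum_le fun b _ => ?_
        split_ifs
        · rw [Matrix.mulVec_single_one, Matrix.mulVec, dotProduct]
          refine totalDegree_finsetSum_le fun a _ => (totalDegree_mul _ _).trans ?_
          rw [add_mul, one_mul]
          exact add_le_add (totalDegree_adjugate_le_mul _ hH _ _) (hG _ _)
        · simp
    have hmulθ : ∀ c : γ → MvPolynomial (Fin (n + 1)) k, GR.mulVec c = 0 ↔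
        Gθ.mulVec (fun i => θ (c i)) = 0 := by
      intro c
      have : ∀ l, θ (GR.mulVec c l) = Gθ.mulVec (fun i => θ (c i)) l :=
        map_mulVec'
          (θ : MvPolynomial (Fin (n + 1)) k →+* Polynomial (MvPolynomial (Fin n) k)) GR c
      constructor
      · intro h
        ext1 l
        rw [← this, h]; simp
      · intro h
        ext1 l
        apply θ.injective
        rw [this, h]; simp
    obtain ⟨Q, hQ⟩ := exists_reduced Gθ j hGθd (by rw [hdetθ]; exact hu) (fun i => θ (c i))
      (by
        intro l
        rw [(hmulθ c).1 (hGGR c hc)]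
        simp)
    set c1 := c - cramerSyz GR j (fun i => θ.symm (Q i)) with hc1
    have hc1syz : GR.mulVec c1 = 0 := by
      rw [hc1, Matrix.mulVec_sub, mulVec_cramerSyz, hGGR c hc, sub_zero]
    have hc1deg : ∀ i, (θ (c1 i)).natDegree ≤ (p + 1) * d := by
      intro i
      have h1 : θ (c1 i) = ((fun i => θ (c i)) - cramerSyz Gθ j Q) i := by
        have := cramerSyz_map
          (θ : MvPolynomial (Fin (n + 1)) k →+* Polynomial (MvPolynomial (Fin n) k)) GR j (fun i => θ.symm (Q i)) i
        simp only [RingHom.coe_coe, AlgEquiv.apply_symm_apply] at this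
        rw [hc1, Pi.sub_apply, map_sub, Pi.sub_apply, this]
        rfl
      rw [h1]
      exact (hQ i).trans (Nat.mul_le_mul_right d (Nat.succ_le_succ hrp))
    suffices hc1W : c1 ∈ W by
      have : c = c1 + cramerSyz GR j (fun i => θ.symm (Q i)) := by rw [hc1]; abel
      rw [this]
      exact add_mem hc1W (hcramer _)
    set s := (p + 1) * d with hs
    let G' := prolong Gθ (s + 1) (s + d + 1)
    -- Coefficient vectors over the smaller ring and the vectors they represent.
    let Λ : (γ × Fin (s + 1) → MvPolynomial (Fin n) k) → γ → MvPolynomial (Fin (n + 1)) k :=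
      fun v i => θ.symm (assemble v i)
    have hθΛ : ∀ v, (fun i => θ (Λ v i)) = assemble v := fun v => by ext1 i; simp [Λ]
    let e : γ × Fin (s + 1) → MvPolynomial (Fin n) k := fun y => (θ (c1 y.1)).coeff y.2
    have hΛe : Λ e = c1 := by
      ext1 i
      simp only [Λ, e]
      rw [assemble_coeff (fun i => θ (c1 i)) hc1deg]
      simp
    have hesyz : G'.mulVec e = 0 := by
      ext1 x
      rw [prolong_mulVec, assemble_coeff (fun i => θ (c1 i)) hc1deg, (hmulθ c1).1 hc1syz]
      simp
    have hcard : Fintype.card (Fin r × Fin (s + d + 1)) ≤ stepSize d p := by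
      simp only [Fintype.card_prod, Fintype.card_fin, stepSize, hs]
      exact Nat.mul_le_mul_right _ hrp
    have hG'd : ∀ x y, (G' x y).totalDegree ≤ d := by
      intro x y
      simp only [G', prolong, Matrix.of_apply, Polynomial.coeff_mul_X_pow']
      split_ifs
      · exact (hθ2 _ _).trans (hG _ _)
      · simp
    have he := ih (stepSize d p) hcard G' hG'd e hesyz
    rw [← hΛe]
    have hΛadd : ∀ v w, Λ (v + w) = Λ v + Λ w := by
      intro v w
      ext1 i
      simp [Λ, assemble, add_mul, Finset.sum_add_distrib]
    have hΛsmul : ∀ (a : MvPolynomial (Fin n) k) v, Λ (a • v) = θ.symm (Polynomial.C a) • Λ v := by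
      intro a v
      ext1 i
      simp [Λ, assemble, Finset.mul_sum, mul_assoc]
    refine Submodule.span_induction (p := fun v _ => Λ v ∈ W) ?_ ?_ ?_ ?_ he
    · rintro v ⟨hv, hvd⟩
      refine Submodule.subset_span ⟨hGRG _ ((hmulθ _).2 ?_), fun i => ?_⟩
      · rw [hθΛ]
        exact mulVec_assemble_eq_of_coeff Gθ hGθd v 0 (by simp) fun x => by
          rw [show prolong Gθ (s + 1) (s + d + 1) = G' from rfl, hv]; simp
      · simp only [Λ, assemble, map_sum]
        refine totalDegree_finsetSum_le fun t _ => (hθ3 _ _).trans ?_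
        have := hvd (i, t)
        have h2 : (t : ℕ) ≤ s := by omega
        have h3 : B = s + syzBound d n (stepSize d p) := rfl
        omega
    · have : Λ 0 = 0 := by ext1 i; simp [Λ, assemble]
      rw [this]; exact zero_mem _
    · intro v w _ _ hv hw
      rw [hΛadd]; exact add_mem hv hw
    · intro a v _ hv
      rw [hΛsmul]; exact Submodule.smul_mem _ _ hv

/-! ### Annihilators of torsion -/

open Polynomial in
/-- If an endomorphism `ℓ` of a module embedded in a quotient of `A^ι` is killed by a nonzero
polynomial over the algebraically closed field `k`, then up to `A`-torsion it is already killed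
by one of degree at most the number of elements of `ι`: the minimal polynomial of `ℓ` over the
fraction field divides a polynomial over `k`, hence has coefficients in `k`. -/
theorem exists_annihilator_mod_torsion {k A N ι : Type*} [Field k] [IsAlgClosed k] [CommRing A]
    [IsDomain A] [Algebra k A] [AddCommGroup N] [Module A N] [Fintype ι]
    (P : Submodule A (ι → A)) (φ : N →ₗ[A] (ι → A) ⧸ P) (hφ : Function.Injective φ)
    (ℓ : Module.End A N) (s : k[X]) (hs : s ≠ 0)
    (h : aeval ℓ (s.map (algebraMap k A)) = 0) :
    ∃ f : k[X], f ≠ 0 ∧ f.natDegree ≤ Fintype.card ι ∧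
      ∀ v, ∃ a : A, a ≠ 0 ∧ a • aeval ℓ (f.map (algebraMap k A)) v = 0 := by
  classical
  let K := FractionRing A
  let ℓK : Module.End K (TensorProduct A K N) := Module.End.baseChangeHom A K N ℓ
  have haev : ∀ q : A[X], aeval ℓK (q.map (algebraMap A K)) =
      Module.End.baseChangeHom A K N (aeval ℓ q) := by
    intro q
    rw [aeval_map_algebraMap, aeval_algHom_apply]
  have hsurj : Function.Surjective (P.mkQ.baseChange K) :=
    LinearMap.lTensor_surjective K P.mkQ_surjective
  have hfinQ : Module.Finite K (TensorProduct A K ((ι → A) ⧸ P)) :=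
    Module.Finite.of_surjective _ hsurj
  have hinj : Function.Injective (φ.baseChange K) :=
    Module.Flat.lTensor_preserves_injective_linearMap φ hφ
  have hfin : Module.Finite K (TensorProduct A K N) := Module.Finite.of_injective _ hinj
  have hrank : Module.finrank K (TensorProduct A K N) ≤ Fintype.card ι := by
    refine (LinearMap.finrank_le_finrank_of_injective hinj).trans ?_
    have h1 := LinearMap.finrank_range_le (P.mkQ.baseChange K)
    rw [LinearMap.range_eq_top.2 hsurj, finrank_top] at h1
    exact h1.trans_eq (by rw [Module.finrank_baseChange]; simp)
  have hintegral : IsIntegral K ℓK := Algebra.IsIntegral.isIntegral ℓK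
  set s1 : k[X] := normalize s with hs1
  have hs1m : s1.Monic := Polynomial.monic_normalize hs
  have hs1' : aeval ℓ (s1.map (algebraMap k A)) = 0 := by
    obtain ⟨q, hq⟩ : s ∣ s1 := (dvd_normalize_iff).2 dvd_rfl
    rw [hq, Polynomial.map_mul, map_mul, h, zero_mul]
  have hdvd : minpoly K ℓK ∣ s1.map (algebraMap k K) := by
    refine minpoly.dvd _ _ ?_
    rw [IsScalarTower.algebraMap_eq k A K, ← Polynomial.map_map, haev, hs1', map_zero]
  have hlift := integralClosure.mem_lifts_of_monic_of_dvd_map K hs1m (minpoly.monic hintegral) hdvd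
  obtain ⟨q, hq⟩ := (mem_lifts _).1 hlift
  obtain ⟨f, hf⟩ := Polynomial.map_surjective (algebraMap k (integralClosure k K))
    (IsAlgClosed.algebraMap_bijective_of_isIntegral).2 q
  have hfK : f.map (algebraMap k K) = minpoly K ℓK := by
    rw [← hq, ← hf, Polynomial.map_map, ← IsScalarTower.algebraMap_eq]
  refine ⟨f, ?_, ?_, ?_⟩
  · rintro rfl
    rw [Polynomial.map_zero] at hfK
    exact minpoly.ne_zero hintegral hfK.symm
  · rw [← natDegree_map (algebraMap k K), hfK]
    refine le_trans ?_ hrank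
    rw [← LinearMap.charpoly_natDegree ℓK]
    exact natDegree_le_of_dvd (LinearMap.minpoly_dvd_charpoly ℓK) (LinearMap.charpoly_monic _).ne_zero
  · intro v
    have h0 : aeval ℓK ((f.map (algebraMap k A)).map (algebraMap A K)) = 0 := by
      rw [Polynomial.map_map, ← IsScalarTower.algebraMap_eq, hfK]
      exact minpoly.aeval K ℓK
    rw [haev] at h0
    have h1 : TensorProduct.mk A K N 1 (aeval ℓ (f.map (algebraMap k A)) v) = 0 := by
      exact LinearMap.congr_fun h0 ((1 : K) ⊗ₜ[A] v)
    obtain ⟨⟨a, ha⟩, ha'⟩ :=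
      (IsLocalizedModule.eq_zero_iff (nonZeroDivisors A) (TensorProduct.mk A K N 1)).1 h1
    exact ⟨a, nonZeroDivisors.ne_zero ha, ha'⟩

open Polynomial in
/-- Elimination of one variable: up to a change of coordinates, the torsion of the cokernel of a
matrix over `k[x₁,…,xₙ₊₁]` embeds into the cokernel of a matrix over `k[x₁,…,xₙ]`, obtained by
taking remainders modulo a maximal nonzero minor. -/
theorem torsion_embedding {k : Type*} [Field k] [Infinite k] {n d p : ℕ} {ι γ : Type*} [Fintype ι]
    [Fintype γ] (hp : Fintype.card ι ≤ p) (G : Matrix ι γ (MvPolynomial (Fin (n + 1)) k))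
    (hG : ∀ l i, (G l i).totalDegree ≤ d) :
    ∃ (r e s : ℕ) (ρ : MvPolynomial (Fin n) k →ₐ[k] MvPolynomial (Fin (n + 1)) k)
      (G' : Matrix (Fin r × Fin e) (γ × Fin s) (MvPolynomial (Fin n) k))
      (χ : ((ι → MvPolynomial (Fin (n + 1)) k) ⧸ LinearMap.range G.mulVecLin) →+
        ((Fin r × Fin e → MvPolynomial (Fin n) k) ⧸ LinearMap.range G'.mulVecLin)),
      (∀ l i, (G' l i).totalDegree ≤ d) ∧ Fintype.card (Fin r × Fin e) ≤ stepSize d p ∧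
      (∀ a v, χ (ρ a • v) = a • χ v) ∧
      ∀ v, (∃ a : MvPolynomial (Fin (n + 1)) k, a ≠ 0 ∧ a • v = 0) → χ v = 0 → v = 0 := by
  classical
  obtain ⟨r, hr, L, j, hdet, hinj⟩ := exists_rank_minor G
  obtain ⟨θ, hθ1, hθ2, hθ3, hu⟩ := exists_coordinates _ hdet
  have hrp : r ≤ p := hr.trans hp
  set s := (p + 1) * d with hs
  set GR : Matrix (Fin r) γ (MvPolynomial (Fin (n + 1)) k) := G.submatrix L id with hGR
  let θr : MvPolynomial (Fin (n + 1)) k →+* Polynomial (MvPolynomial (Fin n) k) := θ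
  let Gθ : Matrix (Fin r) γ (Polynomial (MvPolynomial (Fin n) k)) := GR.map θr
  have hGθd : ∀ l i, (Gθ l i).natDegree ≤ d := fun l i => (hθ1 _).trans (hG _ _)
  have hdetθ : (Gθ.submatrix id j).det = θ (G.submatrix L j).det :=
    (RingHom.map_det θr (G.submatrix L j)).symm
  have hmulθ : ∀ (c : γ → MvPolynomial (Fin (n + 1)) k) l,
      θ (G.mulVec c (L l)) = Gθ.mulVec (fun i => θ (c i)) l := fun c l => map_mulVec' θr GR c l
  set H := Gθ.submatrix id j with hH
  have hDle : H.det.natDegree ≤ r * d := natDegree_det_le_mul H fun a b => hGθd _ _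
  have huH : IsUnit H.det.leadingCoeff := by rw [hdetθ]; exact hu
  obtain ⟨u, hu'⟩ := huH
  set m : (MvPolynomial (Fin n) k)[X] := C (↑u⁻¹ : MvPolynomial (Fin n) k) * H.det with hm
  have hmon : m.Monic := monic_C_mul_of_mul_leadingCoeff_eq_one (by rw [← hu']; simp)
  have hmD : m.natDegree = H.det.natDegree := natDegree_C_mul (Units.ne_zero _)
  -- A vector of multiples of the minor is in the column space.
  have hmult : ∀ q : Fin r → (MvPolynomial (Fin n) k)[X], ∃ c, Gθ.mulVec c = m • q := by
    intro q
    refine ⟨spread j (H.adjugate.mulVec (C (↑u⁻¹ : MvPolynomial (Fin n) k) • q)), ?_⟩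
    rw [mulVec_spread, Matrix.mulVec_mulVec, ← hH, Matrix.mul_adjugate, Matrix.smul_mulVec,
      Matrix.one_mulVec, hm, smul_smul, mul_comm]
  let rem : (ι → MvPolynomial (Fin (n + 1)) k) → Fin r → (MvPolynomial (Fin n) k)[X] :=
    fun v l => θ (v (L l)) %ₘ m
  have hremdeg : ∀ v l, (rem v l).natDegree ≤ H.det.natDegree := fun v l => by
    rw [← hmD]; exact natDegree_modByMonic_le _ hmon
  have hrem : ∀ v, ∃ c, (fun l => θ (v (L l))) = rem v + Gθ.mulVec c := by
    intro v
    obtain ⟨c, hc⟩ := hmult fun l => θ (v (L l)) /ₘ m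
    refine ⟨c, ?_⟩
    rw [hc]
    ext1 l
    exact (modByMonic_add_div _ m).symm
  let G' := prolong Gθ (s + 1) (s + d + 1)
  let χ0 : (ι → MvPolynomial (Fin (n + 1)) k) →+ (Fin r × Fin (s + d + 1) → MvPolynomial (Fin n) k) :=
    { toFun := fun v x => (rem v x.1).coeff x.2
      map_zero' := by ext1 x; simp [rem]
      map_add' := fun v w => by ext1 x; simp [rem, add_modByMonic] }
  have hs1 : (r + 1) * d ≤ s := Nat.mul_le_mul_right d (Nat.succ_le_succ hrp)
  have hwd : ∀ v ∈ LinearMap.range G.mulVecLin, χ0 v ∈ LinearMap.range G'.mulVecLin := by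
    rintro _ ⟨c, rfl⟩
    obtain ⟨c0, hc0⟩ := hrem (G.mulVecLin c)
    have hc1 : Gθ.mulVec ((fun i => θ (c i)) - c0) = rem (G.mulVecLin c) := by
      rw [Matrix.mulVec_sub, sub_eq_iff_eq_add, ← hc0]
      ext1 l
      exact (hmulθ c l).symm
    obtain ⟨Q, hQ⟩ := exists_reduced Gθ j hGθd ⟨u, hu'⟩ ((fun i => θ (c i)) - c0)
      (fun l => by rw [hc1]; exact hremdeg _ l)
    set c2 := ((fun i => θ (c i)) - c0) - cramerSyz Gθ j Q with hc2
    have hc2' : Gθ.mulVec c2 = rem (G.mulVecLin c) := by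
      rw [hc2, Matrix.mulVec_sub, mulVec_cramerSyz, hc1, sub_zero]
    refine ⟨fun y => (c2 y.1).coeff y.2, ?_⟩
    ext1 x
    rw [Matrix.mulVecLin_apply, prolong_mulVec, assemble_coeff c2 fun i => (hQ i).trans hs1, hc2']
    rfl
  let χ : ((ι → MvPolynomial (Fin (n + 1)) k) ⧸ LinearMap.range G.mulVecLin) →+
        ((Fin r × Fin (s + d + 1) → MvPolynomial (Fin n) k) ⧸ LinearMap.range G'.mulVecLin) :=
    QuotientAddGroup.lift (LinearMap.range G.mulVecLin).toAddSubgroup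
      ((LinearMap.range G'.mulVecLin).mkQ.toAddMonoidHom.comp χ0) fun v hv => by
        exact (Submodule.Quotient.mk_eq_zero _).2 (hwd v hv)
  have hχ : ∀ v, χ (Submodule.Quotient.mk v) = Submodule.Quotient.mk (χ0 v) := fun v => rfl
  let ρ : MvPolynomial (Fin n) k →ₐ[k] MvPolynomial (Fin (n + 1)) k :=
    θ.symm.toAlgHom.comp (Polynomial.CAlgHom (R := k) (A := MvPolynomial (Fin n) k))
  have hρ : ∀ a, θ (ρ a) = C a := fun a => by
    simp [ρ]
  refine ⟨r, s + d + 1, s + 1, ρ, G', χ, ?_, ?_, ?_, ?_⟩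
  · intro x y
    simp only [G', prolong, Matrix.of_apply, Polynomial.coeff_mul_X_pow']
    split_ifs
    · exact (hθ2 _ _).trans (hG _ _)
    · simp
  · simp only [Fintype.card_prod, Fintype.card_fin, stepSize, hs]
    exact Nat.mul_le_mul_right _ hrp
  · intro a v
    obtain ⟨v, rfl⟩ := Submodule.Quotient.mk_surjective _ v
    rw [← Submodule.Quotient.mk_smul, hχ, hχ, ← Submodule.Quotient.mk_smul]
    congr 1
    ext1 x
    change ((θ (ρ a * v (L x.1))) %ₘ m).coeff x.2 = a * ((θ (v (L x.1))) %ₘ m).coeff x.2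
    rw [map_mul, hρ, ← smul_eq_C_mul, smul_modByMonic, coeff_smul, smul_eq_mul]
  · rintro v ⟨a, ha, hav⟩ hv
    obtain ⟨v, rfl⟩ := Submodule.Quotient.mk_surjective _ v
    rw [← Submodule.Quotient.mk_smul, Submodule.Quotient.mk_eq_zero] at hav
    rw [hχ, Submodule.Quotient.mk_eq_zero] at hv
    rw [Submodule.Quotient.mk_eq_zero]
    obtain ⟨c0, hc0⟩ := hav
    obtain ⟨e, he⟩ := hv
    rw [Matrix.mulVecLin_apply] at hc0 he
    have h1 : Gθ.mulVec (assemble e) = rem v :=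
      mulVec_assemble_eq_of_coeff Gθ hGθd e (rem v)
        (fun l => (hremdeg v l).trans (hDle.trans (by rw [add_mul] at hs1; omega)))
        fun x => congrFun he x
    obtain ⟨c1, hc1⟩ := hrem v
    rw [← h1, ← Matrix.mulVec_add] at hc1
    set c := fun i => θ.symm ((assemble e + c1) i) with hc
    have h2 : ∀ l, v (L l) = G.mulVec c (L l) := by
      intro l
      apply θ.injective
      rw [hmulθ, show (fun i => θ (c i)) = assemble e + c1 by ext1 i; simp [hc]]
      exact congrFun hc1 l
    have h3 : G.mulVec (c0 - a • c) = 0 := by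
      refine hinj _ fun l => ?_
      rw [Matrix.mulVec_sub, hc0, Matrix.mulVec_smul]
      simp [h2 l]
    rw [Matrix.mulVec_sub, hc0, Matrix.mulVec_smul, ← smul_sub] at h3
    refine ⟨c, ?_⟩
    rw [Matrix.mulVecLin_apply]
    exact (sub_eq_zero.1 ((smul_eq_zero.1 h3).resolve_left ha)).symm

/-- The degree bound for a polynomial in `x₁` killing the `k[x₁]`-torsion of the cokernel of a
matrix with `p` rows and entries of degree at most `d` in `n` variables. -/
def torBound (d : ℕ) : ℕ → ℕ → ℕ
  | 0, p => p
  | n + 1, p => p + torBound d n (stepSize d p)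

section Torsion

open Polynomial

variable {k B N0 : Type*} [Field k] [CommRing B] [Algebra k B] [AddCommGroup N0] [Module B N0]

/-- Variant of `exists_annihilator_mod_torsion` where `A` acts on a `B`-module through `ψ` and the
endomorphism is multiplication by `x ∈ B`. -/
theorem exists_annihilator_mod_torsion' [IsAlgClosed k] {A ι : Type*} [CommRing A] [IsDomain A]
    [Algebra k A] [Fintype ι] (x : B) (ψ : A →ₐ[k] B) (N : Submodule B N0)
    (P : Submodule A (ι → A)) (φ : N →+ (ι → A) ⧸ P) (hφ : Function.Injective φ)
    (hφs : ∀ a v, φ (ψ a • v) = a • φ v) (s : k[X]) (hs : s ≠ 0)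
    (hsN : ∀ v ∈ N, aeval x s • v = 0) :
    ∃ f : k[X], f ≠ 0 ∧ f.natDegree ≤ Fintype.card ι ∧
      ∀ v ∈ N, ∃ a : A, a ≠ 0 ∧ ψ a • aeval x f • v = 0 := by
  let _ : Module A N := Module.compHom N ψ.toRingHom
  have hsm : ∀ (a : A) (v : N), a • v = ψ a • v := fun a v => rfl
  let φ' : N →ₗ[A] (ι → A) ⧸ P := { φ with map_smul' := fun a v => hφs a v }
  let ℓ : Module.End A N :=
    { toFun := fun v => x • v
      map_add' := smul_add x
      map_smul' := fun a v => by
        simp only [hsm, RingHom.id_apply, smul_smul, mul_comm] }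
  have hℓ : ∀ (f : k[X]) (v : N), aeval ℓ (f.map (algebraMap k A)) v = aeval x f • v := by
    intro f
    induction f using Polynomial.induction_on' with
    | add p q hp hq => intro v; simp [hp, hq, add_smul]
    | monomial m a =>
      intro v
      have hpow : ∀ w : N, (ℓ ^ m) w = x ^ m • w := by
        induction m with
        | zero => intro w; simp
        | succ m ih =>
          intro w
          rw [pow_succ', pow_succ', Module.End.mul_apply, ih, mul_smul]
          rfl
      rw [Polynomial.map_monomial, aeval_monomial, aeval_monomial, Module.End.mul_apply, hpow,
        Module.algebraMap_end_apply, hsm, smul_smul, AlgHom.commutes]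
  obtain ⟨f, hf0, hfd, hf⟩ := exists_annihilator_mod_torsion P φ' hφ ℓ s hs (by
    ext1 v
    rw [hℓ]
    exact Subtype.ext (hsN v v.2))
  refine ⟨f, hf0, hfd, fun v hv => ?_⟩
  obtain ⟨a, ha, h⟩ := hf ⟨v, hv⟩
  refine ⟨a, ha, ?_⟩
  rw [hℓ, hsm] at h
  exact congrArg Subtype.val h

/-- The bound on the annihilator of a torsion submodule, by induction on the number of variables:
a polynomial of degree at most the number of rows moves the module into its torsion part, and the
torsion part is handled with one variable less. -/
theorem exists_annihilator [IsAlgClosed k] (d : ℕ) (x : B) (n : ℕ) :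
    ∀ {ι : Type} {γ : Type _} [Fintype ι] [Fintype γ] (p : ℕ) (_ : Fintype.card ι ≤ p)
      (G : Matrix ι γ (MvPolynomial (Fin n) k)) (_ : ∀ l i, (G l i).totalDegree ≤ d)
      (ψ : MvPolynomial (Fin n) k →ₐ[k] B) (N : Submodule B N0)
      (φ : N →+ (ι → MvPolynomial (Fin n) k) ⧸ LinearMap.range G.mulVecLin)
      (_ : Function.Injective φ) (_ : ∀ a v, φ (ψ a • v) = a • φ v) (s : k[X]) (_ : s ≠ 0)
      (_ : ∀ v ∈ N, aeval x s • v = 0),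
      ∃ f : k[X], f ≠ 0 ∧ f.natDegree ≤ torBound d n p ∧ ∀ v ∈ N, aeval x f • v = 0 := by
  have : Infinite k := IsAlgClosed.instInfinite
  induction n with
  | zero =>
    intro ι γ _ _ p hp G hG ψ N φ hφ hφs s hs hsN
    obtain ⟨f, hf0, hfd, hf⟩ := exists_annihilator_mod_torsion' x ψ N _ φ hφ hφs s hs hsN
    refine ⟨f, hf0, hfd.trans hp, fun v hv => ?_⟩
    obtain ⟨a, ha, h⟩ := hf v hv
    -- Without variables, nonzero elements are units.
    rw [MvPolynomial.eq_C_of_isEmpty a] at ha h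
    set c := MvPolynomial.coeff 0 a
    have hc : c ≠ 0 := by rintro h; simp [h] at ha
    have h1 : ψ (MvPolynomial.C c⁻¹) * ψ (MvPolynomial.C c) = 1 := by
      rw [← map_mul, ← map_mul, inv_mul_cancel₀ hc, map_one, map_one]
    rw [← one_smul B (aeval x f • v), ← h1, mul_smul, h, smul_zero]
  | succ n ih =>
    intro ι γ _ _ p hp G hG ψ N φ hφ hφs s hs hsN
    obtain ⟨f, hf0, hfd, hf⟩ := exists_annihilator_mod_torsion' x ψ N _ φ hφ hφs s hs hsN
    obtain ⟨r, e, t, ρ, G', χ, hG', hcard, hχs, hχ⟩ := torsion_embedding hp G hG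
    let N' : Submodule B N0 :=
      { carrier := {v | v ∈ N ∧ ∃ a : MvPolynomial (Fin (n + 1)) k, a ≠ 0 ∧ ψ a • v = 0}
        zero_mem' := ⟨zero_mem _, 1, one_ne_zero, smul_zero _⟩
        add_mem' := by
          rintro v w ⟨hv, a, ha, hav⟩ ⟨hw, b, hb, hbw⟩
          refine ⟨add_mem hv hw, a * b, mul_ne_zero ha hb, ?_⟩
          rw [smul_add, map_mul, mul_smul (ψ a) (ψ b) w, hbw, mul_comm, mul_smul, hav]
          simp
        smul_mem' := by
          rintro b v ⟨hv, a, ha, hav⟩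
          exact ⟨N.smul_mem b hv, a, ha, by rw [smul_comm, hav, smul_zero]⟩ }
    have hle : N' ≤ N := fun v hv => hv.1
    let φ' : N' →+ (Fin r × Fin e → MvPolynomial (Fin n) k) ⧸ LinearMap.range G'.mulVecLin :=
      χ.comp (φ.comp (Submodule.inclusion hle).toAddMonoidHom)
    have hφ' : Function.Injective φ' := by
      rw [injective_iff_map_eq_zero]
      intro v hv
      obtain ⟨hvN, a, ha, hav⟩ := v.2
      have h0 : φ (Submodule.inclusion hle v) = 0 := by
        refine hχ _ ⟨a, ha, ?_⟩ hv
        rw [← hφs, ← φ.map_zero]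
        congr 1
        exact Subtype.ext hav
      have := (injective_iff_map_eq_zero φ).1 hφ _ h0
      exact Submodule.inclusion_injective hle (by rw [this, map_zero])
    obtain ⟨f1, hf10, hf1d, hf1⟩ := ih (stepSize d p) hcard G' hG' (ψ.comp ρ) N' φ' hφ'
      (fun a v => by
        change χ (φ (Submodule.inclusion hle (ψ (ρ a) • v))) = _
        rw [map_smul, hφs, hχs]
        rfl) s hs fun v hv => hsN v (hle hv)
    refine ⟨f1 * f, mul_ne_zero hf10 hf0, ?_, fun v hv => ?_⟩
    · rw [natDegree_mul hf10 hf0, torBound]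
      have := hfd.trans hp
      omega
    · rw [map_mul, mul_smul]
      exact hf1 _ ⟨N.smul_mem _ hv, hf v hv⟩

end Torsion

/-! ### Algebraically closed fields -/

section AlgClosed

open MvPolynomial

variable {k : Type*} [Field k] {n : ℕ}

/-- A single row as a matrix: its column space is the ideal generated by the entries. -/
theorem mem_range_row {A γ : Type*} [CommRing A] [Fintype γ] (g : γ → A) (v : Unit → A) :
    v ∈ LinearMap.range (Matrix.of fun (_ : Unit) i => g i).mulVecLin ↔
      v () ∈ Ideal.span (Set.range g) := by
  rw [Ideal.mem_span_range_iff_exists_fun]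
  constructor
  · rintro ⟨c, rfl⟩
    exact ⟨c, by simp [Matrix.mulVec, dotProduct, mul_comm]⟩
  · rintro ⟨c, hc⟩
    refine ⟨c, ?_⟩
    ext1 l
    rw [show l = () from rfl, ← hc]
    simp [Matrix.mulVec, dotProduct, mul_comm]

/-- Over an algebraically closed field, a single polynomial in `x` of bounded degree realizes the
saturation. -/
theorem exists_uniform_multiplier [IsAlgClosed k] (d : ℕ) (x : MvPolynomial (Fin n) k)
    {γ : Type*} [Fintype γ] (g : γ → MvPolynomial (Fin n) k) (hg : ∀ i, (g i).totalDegree ≤ d) :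
    ∃ f : Polynomial k, f ≠ 0 ∧ f.natDegree ≤ torBound d n 1 ∧
      ∀ a, (∃ s : Polynomial k, s ≠ 0 ∧ Polynomial.aeval x s * a ∈ Ideal.span (Set.range g)) →
        Polynomial.aeval x f * a ∈ Ideal.span (Set.range g) := by
  classical
  set G : Matrix Unit γ (MvPolynomial (Fin n) k) := Matrix.of fun _ i => g i with hG
  let N : Submodule (MvPolynomial (Fin n) k)
      ((Unit → MvPolynomial (Fin n) k) ⧸ LinearMap.range G.mulVecLin) :=
    { carrier := {v | ∃ s : Polynomial k, s ≠ 0 ∧ Polynomial.aeval x s • v = 0}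
      zero_mem' := ⟨1, one_ne_zero, smul_zero _⟩
      add_mem' := by
        rintro v w ⟨a, ha, hav⟩ ⟨b, hb, hbw⟩
        refine ⟨a * b, mul_ne_zero ha hb, ?_⟩
        rw [smul_add, map_mul, mul_smul _ (Polynomial.aeval x b) w, hbw, mul_comm, mul_smul, hav]
        simp
      smul_mem' := by
        rintro b v ⟨a, ha, hav⟩
        exact ⟨a, ha, by rw [smul_comm, hav, smul_zero]⟩ }
  obtain ⟨T, hT⟩ : N.FG := IsNoetherian.noetherian N
  have hfin : ∀ T : Finset ((Unit → MvPolynomial (Fin n) k) ⧸ LinearMap.range G.mulVecLin),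
      (∀ v ∈ T, v ∈ N) → ∃ s : Polynomial k, s ≠ 0 ∧ ∀ v ∈ T, Polynomial.aeval x s • v = 0 := by
    intro T
    induction T using Finset.induction_on with
    | empty => exact fun _ => ⟨1, one_ne_zero, by simp⟩
    | insert v T _ ih =>
      intro h
      obtain ⟨s, hs, hsT⟩ := ih fun w hw => h w (Finset.mem_insert_of_mem hw)
      obtain ⟨s', hs', hsv⟩ := h v (Finset.mem_insert_self v T)
      refine ⟨s * s', mul_ne_zero hs hs', fun w hw => ?_⟩
      rcases Finset.mem_insert.1 hw with rfl | hw
      · rw [map_mul, mul_smul, hsv, smul_zero]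
      · rw [map_mul, mul_comm, mul_smul, hsT w hw, smul_zero]
  obtain ⟨s, hs, hsT⟩ := hfin T fun v hv => hT ▸ Submodule.subset_span hv
  have hsN : ∀ v ∈ N, Polynomial.aeval x s • v = 0 := by
    intro v hv
    rw [← hT] at hv
    induction hv using Submodule.span_induction with
    | mem v hv => exact hsT v hv
    | zero => exact smul_zero _
    | add v w _ _ hv hw => rw [smul_add, hv, hw, add_zero]
    | smul a v _ hv => rw [smul_comm, hv, smul_zero]
  obtain ⟨f, hf0, hfd, hf⟩ := exists_annihilator d x n 1 (by simp) G (fun _ i => hg i)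
    (AlgHom.id k _) N N.subtype.toAddMonoidHom N.subtype_injective (fun a v => rfl) s hs hsN
  have hmem : ∀ (q : Polynomial k) a, Polynomial.aeval x q * a ∈ Ideal.span (Set.range g) ↔
      Polynomial.aeval x q • (Submodule.Quotient.mk (fun _ => a) :
        (Unit → MvPolynomial (Fin n) k) ⧸ LinearMap.range G.mulVecLin) = 0 := by
    intro q a
    rw [← Submodule.Quotient.mk_smul, Submodule.Quotient.mk_eq_zero, hG, mem_range_row]
    rfl
  refine ⟨f, hf0, hfd, fun a ha => (hmem f a).2 (hf _ ?_)⟩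
  obtain ⟨s, hs, hsa⟩ := ha
  exact ⟨s, hs, (hmem s a).1 hsa⟩

theorem totalDegree_aeval_X_le (i : Fin n) (f : Polynomial k) :
    (Polynomial.aeval (X i : MvPolynomial (Fin n) k) f).totalDegree ≤ f.natDegree := by
  rw [Polynomial.aeval_eq_sum_range]
  refine totalDegree_finsetSum_le fun t ht => (totalDegree_smul_le _ _).trans ?_
  rw [totalDegree_X_pow]
  exact Nat.lt_succ_iff.1 (Finset.mem_range.1 ht)

/-- The degree bound over an algebraically closed field: the saturation equals `I : f` for a
polynomial `f` of bounded degree, and the colon ideal is read off from syzygies. -/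
theorem saturation_of_isAlgClosed [IsAlgClosed k] (d e : ℕ) (hde : d ≤ e)
    (hte : torBound d n 1 ≤ e) (i0 : Fin n) (S : Set (MvPolynomial (Fin n) k))
    (hS : ∀ g ∈ S, g.totalDegree ≤ d) (a : MvPolynomial (Fin n) k)
    (ha : ∃ s : Polynomial k, s ≠ 0 ∧
      Polynomial.aeval (X i0 : MvPolynomial (Fin n) k) s * a ∈ Ideal.span S) :
    a ∈ Ideal.span {b : MvPolynomial (Fin n) k | b.totalDegree ≤ syzBound e n 1 ∧
      ∃ s : Polynomial k, s ≠ 0 ∧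
        Polynomial.aeval (X i0 : MvPolynomial (Fin n) k) s * b ∈ Ideal.span S} := by
  classical
  have : Infinite k := IsAlgClosed.instInfinite
  obtain ⟨F, hFS, hF⟩ := (Submodule.fg_span_iff_fg_span_finset_subset S).1
    (IsNoetherian.noetherian (Ideal.span S))
  have hF' : Ideal.span S = Ideal.span (Set.range fun g : F => (g : MvPolynomial (Fin n) k)) := by
    rw [show (Set.range fun g : F => (g : MvPolynomial (Fin n) k)) = ↑F by simp]
    exact hF
  rw [hF'] at ha ⊢
  obtain ⟨f, hf0, hfd, hf⟩ := exists_uniform_multiplier d (X i0 : MvPolynomial (Fin n) k)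
    (fun g : F => (g : MvPolynomial (Fin n) k)) fun g => hS g (hFS g.2)
  have hfa := hf a ha
  obtain ⟨c, hc⟩ := (Ideal.mem_span_range_iff_exists_fun).1 hfa
  -- The colon ideal consists of the first entries of the syzygies of this row.
  let G : Matrix Unit (Option F) (MvPolynomial (Fin n) k) := Matrix.of fun _ o =>
    o.elim (Polynomial.aeval (X i0 : MvPolynomial (Fin n) k) f) fun g => -(g : MvPolynomial (Fin n) k)
  have hGv : ∀ (v : Option F → MvPolynomial (Fin n) k) l, G.mulVec v l =
      Polynomial.aeval (X i0 : MvPolynomial (Fin n) k) f * v none -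
        ∑ g : F, v (some g) * (g : MvPolynomial (Fin n) k) := by
    intro v l
    simp [G, Matrix.mulVec, dotProduct, Fintype.sum_option, sub_eq_add_neg, mul_comm]
  let v : Option F → MvPolynomial (Fin n) k := fun o => o.elim a c
  have hv : G.mulVec v = 0 := by
    ext1 l
    rw [hGv, Pi.zero_apply, sub_eq_zero]
    exact hc.symm
  have hGd : ∀ l o, (G l o).totalDegree ≤ e := by
    rintro l (_ | g)
    · exact (totalDegree_aeval_X_le i0 f).trans (hfd.trans hte)
    · change (-(g : MvPolynomial (Fin n) k)).totalDegree ≤ e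
      rw [totalDegree_neg]
      exact (hS g (hFS g.2)).trans hde
  have hspan := syzygies_generated e n 1 (by simp) G hGd v hv
  have hproj := Submodule.mem_map_of_mem
    (f := LinearMap.proj (R := MvPolynomial (Fin n) k) (none : Option F)) hspan
  refine Submodule.map_span_le _ _ _ |>.2 ?_ hproj
  rintro w ⟨hw, hwd⟩
  refine Submodule.subset_span ⟨hwd none, f, hf0, ?_⟩
  have := congrFun hw ()
  rw [hGv, Pi.zero_apply, sub_eq_zero] at this
  exact (Ideal.mem_span_range_iff_exists_fun).2 ⟨fun g => w (some g), this.symm⟩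

end AlgClosed

/-! ### Descent from the algebraic closure -/

section Descent

open MvPolynomial

variable {k K σ : Type*} [Field k] [Field K] [Algebra k K]

/-- Coefficientwise application of a `k`-linear form on `K`. -/
noncomputable def mapCoeff (l : K →ₗ[k] k) (a : MvPolynomial σ K) : MvPolynomial σ k :=
  ∑ m ∈ a.support, monomial m (l (a.coeff m))

theorem coeff_mapCoeff (l : K →ₗ[k] k) (a : MvPolynomial σ K) (m : σ →₀ ℕ) :
    (mapCoeff l a).coeff m = l (a.coeff m) := by
  classical
  simp only [mapCoeff, coeff_sum, coeff_monomial, Finset.sum_ite_eq', mem_support_iff, ne_eq,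
    ite_not, ite_eq_right_iff]
  intro h
  rw [h, map_zero]

theorem mapCoeff_add (l : K →ₗ[k] k) (a b : MvPolynomial σ K) :
    mapCoeff l (a + b) = mapCoeff l a + mapCoeff l b := by
  ext m; simp [coeff_mapCoeff]

theorem mapCoeff_map_mul (l : K →ₗ[k] k) (b : MvPolynomial σ k) (a : MvPolynomial σ K) :
    mapCoeff l (map (algebraMap k K) b * a) = b * mapCoeff l a := by
  classical
  ext m
  simp only [coeff_mapCoeff, coeff_mul, map_sum, coeff_map, ← Algebra.smul_def, map_smul,
    smul_eq_mul]

theorem totalDegree_mapCoeff_le (l : K →ₗ[k] k) (a : MvPolynomial σ K) :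
    (mapCoeff l a).totalDegree ≤ a.totalDegree := by
  refine totalDegree_finsetSum_le fun m hm => (totalDegree_monomial_le _ _).trans ?_
  exact le_totalDegree hm

theorem mapCoeff_monomial_mul (l : K →ₗ[k] k) (m : σ →₀ ℕ) (c : K) (a : MvPolynomial σ K) :
    mapCoeff l (monomial m c * a) =
      monomial m 1 * mapCoeff (l ∘ₗ LinearMap.mulLeft k c) a := by
  have h : monomial m c * a = map (algebraMap k K) (monomial m (1 : k)) * (C c * a) := by
    rw [← mul_assoc, map_monomial, map_one, mul_comm (monomial m (1 : K)), C_mul_monomial, mul_one]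
  rw [h, mapCoeff_map_mul]
  congr 1
  ext u
  simp [coeff_mapCoeff, coeff_C_mul]

/-- Linear forms send the ideal generated by a set over `K` into the ideal generated over `k`, as
soon as they do so on the generators. -/
theorem mapCoeff_mem_span {U : Set (MvPolynomial σ K)} {J : Ideal (MvPolynomial σ k)}
    (hU : ∀ u ∈ U, ∀ l : K →ₗ[k] k, mapCoeff l u ∈ J) (a : MvPolynomial σ K)
    (ha : a ∈ Ideal.span U) (l : K →ₗ[k] k) : mapCoeff l a ∈ J := by
  suffices h : ∀ b, mapCoeff l (b * a) ∈ J by simpa using h 1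
  induction ha using Submodule.span_induction with
  | mem u hu =>
    intro b
    induction b using MvPolynomial.induction_on'' with
    | C c =>
      rw [C_apply, mapCoeff_monomial_mul]
      exact J.mul_mem_left _ (hU u hu _)
    | monomial_add m c f _ _ hf hm =>
      rw [add_mul, mapCoeff_add, mapCoeff_monomial_mul]
      exact J.add_mem (J.mul_mem_left _ (hU u hu _)) hf
    | mul_X f i hf =>
      rw [mul_right_comm, ← map_X (algebraMap k K), mul_comm, mapCoeff_map_mul]
      exact J.mul_mem_left _ hf
  | zero =>
    intro b
    have : mapCoeff l (b * 0) = 0 := by ext m; simp [coeff_mapCoeff]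
    rw [this]; exact J.zero_mem
  | add x y _ _ hx hy =>
    intro b
    rw [mul_add, mapCoeff_add]
    exact J.add_mem (hx b) (hy b)
  | smul c x _ hx =>
    intro b
    rw [smul_eq_mul, ← mul_assoc]
    exact hx _

/-- Replace each root by its minimal polynomial. -/
theorem exists_dvd_map [IsAlgClosed K] [Algebra.IsAlgebraic k K] (s' : Polynomial K)
    (hs' : s' ≠ 0) : ∃ s : Polynomial k, s ≠ 0 ∧ s' ∣ s.map (algebraMap k K) := by
  refine ⟨(s'.roots.map fun r => minpoly k r).prod, ?_, ?_⟩
  · refine Multiset.prod_ne_zero ?_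
    intro h
    obtain ⟨r, _, hr⟩ := Multiset.mem_map.1 h
    exact minpoly.ne_zero (Algebra.IsIntegral.isIntegral r) hr
  · have h1 := (IsAlgClosed.splits s').eq_prod_roots
    rw [Polynomial.map_multiset_prod, Multiset.map_map]
    conv_lhs => rw [h1]
    have hu : IsUnit (Polynomial.C s'.leadingCoeff) :=
      Polynomial.isUnit_C.2 (IsUnit.mk0 _ (Polynomial.leadingCoeff_ne_zero.2 hs'))
    rw [hu.mul_left_dvd]
    refine Multiset.prod_dvd_prod_of_dvd _ _ fun r _ => ?_
    rw [Polynomial.dvd_iff_isRoot, Polynomial.IsRoot, Function.comp_apply, Polynomial.eval_map_algebraMap]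
    exact minpoly.aeval k r

/-- Degree bounds for the saturation descend from an algebraic closure. -/
theorem saturation_descent [IsAlgClosed K] [Algebra.IsAlgebraic k K] (D : ℕ) (i0 : σ)
    (S : Set (MvPolynomial σ k))
    (hK : ∀ a : MvPolynomial σ K, (∃ s : Polynomial K, s ≠ 0 ∧
        Polynomial.aeval (X i0 : MvPolynomial σ K) s * a ∈
          Ideal.span (map (algebraMap k K) '' S)) →
      a ∈ Ideal.span {b : MvPolynomial σ K | b.totalDegree ≤ D ∧ ∃ s : Polynomial K, s ≠ 0 ∧
        Polynomial.aeval (X i0 : MvPolynomial σ K) s * b ∈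
          Ideal.span (map (algebraMap k K) '' S)})
    (a : MvPolynomial σ k) (ha : ∃ s : Polynomial k, s ≠ 0 ∧
      Polynomial.aeval (X i0 : MvPolynomial σ k) s * a ∈ Ideal.span S) :
    a ∈ Ideal.span {b : MvPolynomial σ k | b.totalDegree ≤ D ∧ ∃ s : Polynomial k, s ≠ 0 ∧
      Polynomial.aeval (X i0 : MvPolynomial σ k) s * b ∈ Ideal.span S} := by
  have haev : ∀ s : Polynomial k,
      Polynomial.aeval (X i0 : MvPolynomial σ K) (s.map (algebraMap k K)) =
        map (algebraMap k K) (Polynomial.aeval (X i0 : MvPolynomial σ k) s) := by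
    intro s
    rw [Polynomial.aeval_def, Polynomial.eval₂_map, Polynomial.aeval_def, Polynomial.hom_eval₂]
    congr 1
    · ext c; simp [algebraMap_eq]
    · simp
  obtain ⟨l, hl⟩ := (Algebra.linearMap k K).exists_leftInverse_of_injective
    (LinearMap.ker_eq_bot.2 (algebraMap k K).injective)
  have hla : mapCoeff l (map (algebraMap k K) a) = a := by
    ext m
    rw [coeff_mapCoeff, coeff_map]
    exact LinearMap.congr_fun hl _
  rw [← hla]
  refine mapCoeff_mem_span ?_ _ (hK _ ?_) l
  · rintro u ⟨hud, s', hs', hu⟩ l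
    obtain ⟨s, hs, hss'⟩ := exists_dvd_map (k := k) s' hs'
    refine Submodule.subset_span ⟨(totalDegree_mapCoeff_le l u).trans hud, s, hs, ?_⟩
    rw [← mapCoeff_map_mul, ← haev]
    refine mapCoeff_mem_span (U := map (algebraMap k K) '' S) ?_ _ ?_ l
    · rintro _ ⟨g, hg, rfl⟩ l
      rw [← mul_one (map (algebraMap k K) g), mapCoeff_map_mul]
      exact Ideal.mul_mem_right _ _ (Ideal.subset_span hg)
    · obtain ⟨q, hq⟩ := hss'
      rw [hq, map_mul, mul_right_comm]
      exact Ideal.mul_mem_right _ _ hu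
  · obtain ⟨s, hs, hsa⟩ := ha
    refine ⟨s.map (algebraMap k K), (Polynomial.map_ne_zero_iff (algebraMap k K).injective).2 hs, ?_⟩
    rw [haev, ← map_mul, ← Ideal.map_span]
    exact Ideal.mem_map_of_mem _ hsa

end Descent

/-! ### Numerical estimates -/

section Numerics

theorem stepSize_mul_le (d p : ℕ) (hd : 1 ≤ d) (hp : 1 ≤ p) :
    stepSize d p * d ≤ 4 * (p * d) ^ 2 := by
  unfold stepSize
  obtain ⟨d, rfl⟩ := Nat.exists_eq_add_of_le hd
  obtain ⟨p, rfl⟩ := Nat.exists_eq_add_of_le hp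
  ring_nf
  nlinarith [Nat.zero_le (d * p), Nat.zero_le (d^2*p)]

theorem four_mul_le_stepSize (d p : ℕ) (hd : 1 ≤ d) (hp : 1 ≤ p) : 4 * p ≤ stepSize d p := by
  unfold stepSize
  nlinarith [Nat.mul_le_mul hp hd]

theorem stepSize_pow_le (d p n : ℕ) (hd : 1 ≤ d) (hp : 1 ≤ p) :
    (4 * (stepSize d p * d)) ^ 2 ^ n ≤ (4 * (p * d)) ^ 2 ^ (n + 1) := by
  rw [pow_succ', pow_mul]
  refine Nat.pow_le_pow_left ?_ _
  have := stepSize_mul_le d p hd hp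
  rw [mul_pow]
  omega

theorem torBound_add_le (d : ℕ) (hd : 1 ≤ d) (n : ℕ) :
    ∀ p, 1 ≤ p → torBound d n p + p ≤ (4 * (p * d)) ^ 2 ^ n := by
  induction n with
  | zero =>
    intro p hp
    simp only [torBound, pow_zero, pow_one]
    nlinarith [Nat.mul_le_mul_left p hd]
  | succ n ih =>
    intro p hp
    have h4 := four_mul_le_stepSize d p hd hp
    refine le_trans ?_ ((ih _ (by omega : 1 ≤ stepSize d p)).trans (stepSize_pow_le d p n hd hp))
    rw [torBound]
    omega

theorem syzBound_add_le (d : ℕ) (hd : 1 ≤ d) (n : ℕ) :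
    ∀ p, 1 ≤ p → syzBound d n p + 2 * (p * d) ≤ (4 * (p * d)) ^ 2 ^ n := by
  induction n with
  | zero =>
    intro p hp
    simp only [syzBound, pow_zero, pow_one]
    omega
  | succ n ih =>
    intro p hp
    have h4 := four_mul_le_stepSize d p hd hp
    refine le_trans ?_ ((ih _ (by omega : 1 ≤ stepSize d p)).trans (stepSize_pow_le d p n hd hp))
    rw [syzBound]
    nlinarith [Nat.mul_le_mul_right d h4, Nat.mul_le_mul_right d hp]

theorem final_bound (n d : ℕ) (hn : 1 ≤ n) (hd : 2 ≤ d) :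
    (4 * (4 * d) ^ 2 ^ n) ^ 2 ^ n ≤ 2 ^ (n * 2 ^ (n + 3)) * d ^ (n * 2 ^ (2 * n + 1)) := by
  set m := 2 ^ n with hm
  have hm2 : 2 ^ (2 * n + 1) = 2 * m ^ 2 := by rw [hm, pow_succ, pow_mul' 2 2 n]; ring
  have hm3 : 2 ^ (n + 3) = 8 * m := by rw [hm, pow_add]; ring
  rw [hm2, hm3]
  have hlhs : (4 * (4 * d) ^ m) ^ m = 2 ^ (2 * m) * (2 ^ (2 * m ^ 2) * d ^ (m ^ 2)) := by
    rw [mul_pow, ← pow_mul, mul_pow, show (4 : ℕ) = 2 ^ 2 by norm_num, ← pow_mul, ← pow_mul, sq m]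
  rw [hlhs]
  rcases Nat.lt_or_ge n 2 with h | h
  · obtain rfl : n = 1 := by omega
    have : m = 2 := by rw [hm]; norm_num
    rw [this, ← mul_assoc, ← pow_add]
    refine Nat.mul_le_mul (Nat.pow_le_pow_right (by norm_num) (by norm_num)) ?_
    exact Nat.pow_le_pow_right (by omega) (by norm_num)
  · refine Nat.mul_le_mul (Nat.pow_le_pow_right (by norm_num) (by nlinarith)) ?_
    calc 2 ^ (2 * m ^ 2) * d ^ (m ^ 2) ≤ d ^ (2 * m ^ 2) * d ^ (m ^ 2) :=
          Nat.mul_le_mul_right _ (Nat.pow_le_pow_left hd _)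
      _ = d ^ (2 * m ^ 2 + m ^ 2) := (pow_add _ _ _).symm
      _ ≤ d ^ (n * (2 * m ^ 2)) := Nat.pow_le_pow_right (by omega) (by nlinarith)

end Numerics

/-! ### Ideals generated in degree one -/

section Linear

open MvPolynomial

variable {k : Type*} [Field k] {n : ℕ}

theorem eq_of_totalDegree_le_one (g : MvPolynomial (Fin n) k) (hg : g.totalDegree ≤ 1) :
    g = C (g.coeff 0) + ∑ i, C (g.coeff (Finsupp.single i 1)) * X i := by
  classical
  ext m
  rw [coeff_add, coeff_C, coeff_sum]
  simp only [coeff_C_mul, coeff_X, mul_ite, mul_one, mul_zero]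
  by_cases hm : m.degree ≤ 1
  · rcases Nat.le_one_iff_eq_zero_or_eq_one.1 hm with h | h
    · have : m = 0 := (Finsupp.degree_eq_zero_iff m).1 h
      subst this
      simp
    · obtain ⟨i, rfl⟩ : ∃ i, m = Finsupp.single i 1 := (Finsupp.sum_eq_one_iff m).1 h
      rw [if_neg (by simp [eq_comm]), zero_add, Finset.sum_eq_single i]
      · simp
      · intro b _ hb
        rw [if_neg]
        intro h
        exact hb (Finsupp.single_left_injective one_ne_zero h)
      · simp
  · have h1 : g.coeff m = 0 := by
      by_contra h
      exact hm ((le_totalDegree (mem_support_iff.2 h)).trans hg)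
    rw [h1, if_neg (by rintro rfl; simp at hm), zero_add, Finset.sum_eq_zero]
    intro i _
    rw [if_neg]
    rintro rfl
    simp at hm

/-- An ideal generated by polynomials of degree at most one is prime unless it is the unit ideal:
a nonconstant generator can be used to eliminate a variable. -/
theorem span_linear_eq_top_or_isPrime (n : ℕ) :
    ∀ (S : Set (MvPolynomial (Fin n) k)) (_ : ∀ g ∈ S, g.totalDegree ≤ 1),
      Ideal.span S = ⊤ ∨ (Ideal.span S).IsPrime := by
  have hconst : ∀ (n : ℕ) (S : Set (MvPolynomial (Fin n) k)) (_ : ∀ g ∈ S, g.totalDegree ≤ 1)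
      (_ : ¬ ∃ g ∈ S, ∃ i, g.coeff (Finsupp.single i 1) ≠ 0),
      Ideal.span S = ⊤ ∨ (Ideal.span S).IsPrime := by
    intro n S hS h
    have hC : ∀ g ∈ S, g = C (g.coeff 0) := by
      intro g hg
      conv_lhs => rw [eq_of_totalDegree_le_one g (hS g hg)]
      rw [Finset.sum_eq_zero, add_zero]
      intro i _
      by_contra h0
      refine h ⟨g, hg, i, ?_⟩
      rintro h1
      simp [h1] at h0
    by_cases h0 : ∃ g ∈ S, g.coeff 0 ≠ 0
    · obtain ⟨g, hg, hg0⟩ := h0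
      left
      refine Ideal.eq_top_of_isUnit_mem _ (Ideal.subset_span hg) ?_
      rw [hC g hg]
      exact (IsUnit.mk0 _ hg0).map C
    · right
      have : Ideal.span S = ⊥ := by
        rw [Ideal.span_eq_bot]
        intro g hg
        rw [hC g hg]
        by_contra hne
        refine h0 ⟨g, hg, ?_⟩
        intro h1
        simp [h1] at hne
      rw [this]
      exact Ideal.isPrime_bot
  induction n with
  | zero =>
    intro S hS
    exact hconst 0 S hS (by rintro ⟨_, _, i, _⟩; exact i.elim0)
  | succ n ih =>
    intro S hS
    by_cases h : ∃ g ∈ S, ∃ i, g.coeff (Finsupp.single i 1) ≠ 0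
    swap
    · exact hconst _ S hS h
    obtain ⟨g, hg, i, hc⟩ := h
    set c := g.coeff (Finsupp.single i 1) with hcdef
    let q : MvPolynomial (Fin n) k :=
      C (g.coeff 0) + ∑ j, C (g.coeff (Finsupp.single (i.succAbove j) 1)) * X j
    have hgq : g = C c * X i + rename i.succAbove q := by
      conv_lhs => rw [eq_of_totalDegree_le_one g (hS g hg), Fin.sum_univ_succAbove _ i]
      simp only [q, map_add, map_sum, map_mul, rename_C, rename_X]
      ring
    have hq : q.totalDegree ≤ 1 := by
      refine (totalDegree_add _ _).trans (max_le (by simp) ?_)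
      refine totalDegree_finsetSum_le fun j _ => (totalDegree_mul _ _).trans ?_
      simp
    let f : Fin (n + 1) → MvPolynomial (Fin n) k :=
      Fin.insertNth (α := fun _ => MvPolynomial (Fin n) k) i (-(C c⁻¹ * q)) X
    have hfi : f i = -(C c⁻¹ * q) := by simp [f]
    have hfs : ∀ j, f (i.succAbove j) = X j := by simp [f]
    let φ : MvPolynomial (Fin (n + 1)) k →ₐ[k] MvPolynomial (Fin n) k := aeval f
    have hφψ : ∀ b, φ (rename i.succAbove b) = b := by
      intro b
      simp only [φ, aeval_rename]
      rw [show f ∘ i.succAbove = X from funext hfs, aeval_X_left_apply]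
    have hφg : φ g = 0 := by
      rw [hgq, map_add, hφψ, map_mul]
      simp only [φ, aeval_X, hfi]
      rw [← algebraMap_eq, AlgHom.commutes, algebraMap_eq, mul_neg, ← mul_assoc, ← C_mul,
        mul_inv_cancel₀ hc, C_1]
      ring
    have hdiff : ∀ a, a - rename i.succAbove (φ a) ∈ Ideal.span S := by
      intro a
      rw [← Ideal.Quotient.mk_eq_mk_iff_sub_mem]
      have hext : (Ideal.Quotient.mkₐ k (Ideal.span S)) =
          (Ideal.Quotient.mkₐ k (Ideal.span S)).comp ((rename i.succAbove).comp φ) := by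
        refine MvPolynomial.algHom_ext fun l => ?_
        simp only [AlgHom.comp_apply, φ, aeval_X]
        refine Fin.succAboveCases i ?_ (fun j => ?_) l
        · rw [hfi]
          refine (Ideal.Quotient.mk_eq_mk_iff_sub_mem _ _).2 ?_
          have : X i - rename i.succAbove (-(C c⁻¹ * q)) = C c⁻¹ * g := by
            rw [hgq, map_neg, map_mul, rename_C, mul_add, ← mul_assoc, ← C_mul,
              inv_mul_cancel₀ hc, C_1]
            ring
          rw [this]
          exact Ideal.mul_mem_left _ _ (Ideal.subset_span hg)
        · rw [hfs, rename_X]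
      exact AlgHom.congr_fun hext a
    have hsurj : Function.Surjective φ := fun b => ⟨_, hφψ b⟩
    have hcomap : Ideal.span S = (Ideal.span (φ '' S)).comap φ := by
      have hker : RingHom.ker φ ≤ Ideal.span S := fun a ha => by
        have := hdiff a
        rw [RingHom.mem_ker] at ha
        rwa [ha, map_zero, sub_zero] at this
      have h1 := Ideal.comap_map_of_surjective' φ.toRingHom hsurj (Ideal.span S)
      rw [Ideal.map_span] at h1
      refine Eq.trans ?_ h1.symm
      exact (sup_eq_left.2 hker).symm
    have hdeg : ∀ b ∈ φ '' S, b.totalDegree ≤ 1 := by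
      rintro _ ⟨a, ha, rfl⟩
      refine (totalDegree_aeval_le f ?_ a).trans (hS a ha)
      intro l
      refine Fin.succAboveCases i ?_ (fun j => ?_) l
      · rw [hfi, totalDegree_neg]
        refine (totalDegree_mul _ _).trans ?_
        simpa using hq
      · rw [hfs]; simp
    rcases ih _ hdeg with h | h
    · left
      rw [hcomap, h, Ideal.comap_top]
    · right
      rw [hcomap]
      exact Ideal.IsPrime.comap φ

end Linear

/-! ### The degree bound over an arbitrary field -/

/-- The saturation of a nonzero ideal generated in degree at most `d`
by the multiplicative set `k[x₁]∖{0}` is generated by polynomials of total degree at most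
`2^(n·2^(n+3))·d^(n·2^(2n+1))`. -/
theorem saturation_bounded_generators
    (k : Type*) [Field k] (n d : ℕ) (hn : 1 ≤ n) (hd : 1 ≤ d)
    (I : Ideal (MvPolynomial (Fin n) k)) (hI : I ≠ ⊥)
    (S : Set (MvPolynomial (Fin n) k)) (hgen : I = Ideal.span S)
    (hdeg : ∀ g ∈ S, g.totalDegree ≤ d) :
    ∃ T : Set (MvPolynomial (Fin n) k),
      (∀ g ∈ T, g.totalDegree ≤ 2 ^ (n * 2 ^ (n + 3)) * d ^ (n * 2 ^ (2 * n + 1))) ∧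
      ∀ a : MvPolynomial (Fin n) k, a ∈ Ideal.span T ↔
        ∃ s : Polynomial k, s ≠ 0 ∧
          Polynomial.aeval (MvPolynomial.X (⟨0, hn⟩ : Fin n) :
            MvPolynomial (Fin n) k) s * a ∈ I := by
  subst hgen
  set x : MvPolynomial (Fin n) k := MvPolynomial.X (⟨0, hn⟩ : Fin n) with hx
  rcases Nat.lt_or_ge 1 d with hd2 | hd1
    -- The generators are all elements of the saturation of bounded degree.
  · refine ⟨{b | b.totalDegree ≤ 2 ^ (n * 2 ^ (n + 3)) * d ^ (n * 2 ^ (2 * n + 1)) ∧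
      ∃ s : Polynomial k, s ≠ 0 ∧ Polynomial.aeval x s * b ∈ Ideal.span S}, fun g hg => hg.1,
      fun a => ⟨fun ha => ?_, fun ha => ?_⟩⟩
    · induction ha using Submodule.span_induction with
      | mem b hb => exact hb.2
      | zero => exact ⟨1, one_ne_zero, by simp⟩
      | add b c _ _ hb hc =>
        obtain ⟨s, hs, hsb⟩ := hb
        obtain ⟨t, ht, htc⟩ := hc
        refine ⟨s * t, mul_ne_zero hs ht, ?_⟩
        rw [map_mul, mul_add]
        refine add_mem ?_ ?_
        · rw [mul_right_comm]
          exact Ideal.mul_mem_right _ _ hsb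
        · rw [mul_assoc]
          exact Ideal.mul_mem_left _ _ htc
      | smul c b _ hb =>
        obtain ⟨s, hs, hsb⟩ := hb
        refine ⟨s, hs, ?_⟩
        rw [smul_eq_mul, mul_left_comm]
        exact Ideal.mul_mem_left _ _ hsb
    · let K := AlgebraicClosure k
      set e := (4 * d) ^ 2 ^ n with he
      have hde : d ≤ e :=
        (by omega : d ≤ 4 * d).trans (Nat.le_self_pow (pow_ne_zero _ two_ne_zero) _)
      have hte : torBound d n 1 ≤ e := by
        have := torBound_add_le d hd n 1 le_rfl
        rw [one_mul] at this
        omega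
      have hsyz : syzBound e n 1 ≤ 2 ^ (n * 2 ^ (n + 3)) * d ^ (n * 2 ^ (2 * n + 1)) := by
        have := syzBound_add_le e (hd.trans hde) n 1 le_rfl
        rw [one_mul] at this
        exact (Nat.le_of_add_right_le this).trans (final_bound n d hn hd2)
      have hK := saturation_of_isAlgClosed (k := K) d e hde hte (⟨0, hn⟩ : Fin n)
        (MvPolynomial.map (algebraMap k K) '' S) (by
          rintro _ ⟨g, hg, rfl⟩
          exact (Finset.sup_mono (MvPolynomial.support_map_subset _ _)).trans (hdeg g hg))
      have hk := saturation_descent (k := k) (K := K) (syzBound e n 1) (⟨0, hn⟩ : Fin n) S hK a ha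
      refine Ideal.span_mono ?_ hk
      rintro b ⟨hb, hbS⟩
      exact ⟨hb.trans hsyz, hbS⟩
    -- For `d = 1` the ideal is prime or the unit ideal, and the saturation is `I` or everything.
  · obtain rfl : d = 1 := le_antisymm hd1 hd
    by_cases h : ∃ s : Polynomial k, s ≠ 0 ∧ Polynomial.aeval x s ∈ Ideal.span S
    · obtain ⟨s, hs, hsS⟩ := h
      refine ⟨{1}, by simp, fun a => ⟨fun _ => ⟨s, hs, Ideal.mul_mem_right _ _ hsS⟩, fun _ => ?_⟩⟩
      rw [Ideal.span_singleton_one]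
      exact Submodule.mem_top
    · refine ⟨S, fun g hg => (hdeg g hg).trans (by simpa using Nat.one_le_two_pow), fun a =>
        ⟨fun ha => ⟨1, one_ne_zero, by simpa using ha⟩, ?_⟩⟩
      rintro ⟨s, hs, hsa⟩
      rcases span_linear_eq_top_or_isPrime n S hdeg with hS | hS
      · rw [hS]; exact Submodule.mem_top
      · exact (hS.mem_or_mem hsa).resolve_left fun h' => h ⟨s, hs, h'⟩
end

section
/- Let k be a field, n ≥ 1, d ≥ 1 and r ≤ n natural numbers, let I be an ideal of k[x_1,…,x_n] generated by polynomials of total degree at most d, and let u ∈ k[x_1,…,x_n] have total degree at most d. If there exists a nonzero polynomial p ∈ k[x_1,…,x_r][Y] (Y a new indeterminate) such that the polynomial obtained from p by substituting u for Y belongs to I, then there exists a nonzero polynomial q ∈ k[x_1,…,x_r][Y] of total degree (in the variables x_1,…,x_r, Y together) at most 2·d^(2^(n+1)) such that the polynomial obtained from q by substituting u for Y belongs to I. -/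
/-!
Adjoin `Y` and the relation `Y - u`: with `A = k[x₁,…,x_r,Y]` and `m = n - r`, the ideal `I`
becomes an ideal `J` of `A[y₁,…,y_m]` generated in total degree at most `d`, and the polynomials
`q` with `q(u) ∈ I` are exactly the elements of `J ∩ A`. The claim is thus that `J ∩ A ≠ 0` forces
a nonzero element of `J ∩ A` of small degree. The argument below gives the bound `d ^ 2 ^ m`.

The variables `y` are eliminated one at a time by resultants, each of which squares the degree.
Assume first that `k` is infinite. A linear change of the variables `y` (`exists_shear`) makes the
leading coefficient in `y₀` of some generator `f` a nonzero element of `A`. Let `V` be the `k`-span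
of the generators and let `J'` be generated by the resultants `Res_{y₀}(f, g)`, `g ∈ V`. They lie
in `J`, are free of `y₀`, and have degree at most `d ^ 2` (`DegFiltration.resultant_mem`). The point
is that `J' ∩ A ≠ 0` (`exists_ne_zero_C_mem_span_resultant`): otherwise some prime containing `J'`
meets `A` in `0`, i.e. there is a map `ψ` from `A[y₁,…]` to an algebraically closed field, injective
on `A` and killing `J'`. Each `g ∈ V` then shares a root with `ψ(f)`, so `V` is a finite union of
the subspaces of those `g` vanishing at a given root of `ψ(f)`; as `k` is infinite, one root kills
all of `V`, hence `J`, hence `J ∩ A`, contradicting the injectivity of `ψ` on `A`. Iterating gives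
`exists_bounded_constant`.

For general `k`, pass to the algebraic closure and come back by applying a `k`-linear functional to
all coefficients (`coeffwise`).
-/

open MvPolynomial

/-! ### Degree filtrations -/

/-- An increasing multiplicative filtration of a `k`-algebra by subspaces, zero in negative
degrees; `F j` plays the role of the elements of degree at most `j`. Integer indices let
`F (j - i)` vanish automatically when `i > j`. -/
structure DegFiltration (k A : Type*) [Field k] [CommRing A] [Algebra k A] where
  F : ℤ → Submodule k A
  mono : Monotone F
  one_mem : 1 ∈ F 0
  mul_mem : ∀ {i j : ℤ} {a b : A}, a ∈ F i → b ∈ F j → a * b ∈ F (i + j)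
  eq_zero_of_neg : ∀ {i : ℤ} {a : A}, i < 0 → a ∈ F i → a = 0

namespace DegFiltration

variable {k A : Type*} [Field k] [CommRing A] [Algebra k A]

lemma pow_mem (G : DegFiltration k A) {i : ℤ} {a : A} (ha : a ∈ G.F i) (n : ℕ) :
    a ^ n ∈ G.F (n * i) := by
  induction n with
  | zero => simpa using G.one_mem
  | succ n ih =>
    rw [pow_succ, Nat.cast_succ, add_mul, one_mul]
    exact G.mul_mem ih ha

lemma prod_mem (G : DegFiltration k A) {ι : Type*} (s : Finset ι) (w : ι → ℤ) (a : ι → A)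
    (h : ∀ i ∈ s, a i ∈ G.F (w i)) : ∏ i ∈ s, a i ∈ G.F (∑ i ∈ s, w i) := by
  classical
  induction s using Finset.induction_on with
  | empty => simpa using G.one_mem
  | insert i s hi ih =>
    rw [Finset.prod_insert hi, Finset.sum_insert hi]
    exact G.mul_mem (h i (by simp)) (ih fun j hj => h j (by simp [hj]))

/-- Row and column weights bounding the degrees of the entries bound the degree of the
determinant. -/
lemma det_mem (G : DegFiltration k A) {ι : Type*} [Fintype ι] [DecidableEq ι]
    (M : Matrix ι ι A) (row col : ι → ℤ) (h : ∀ i j, M i j ∈ G.F (col j - row i)) :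
    M.det ∈ G.F (∑ j, col j - ∑ i, row i) := by
  rw [Matrix.det_apply]
  refine Submodule.sum_mem _ fun σ _ => ?_
  have h1 : ∏ i, M (σ i) i ∈ G.F (∑ j, col j - ∑ i, row i) := by
    have := G.prod_mem Finset.univ (fun i => col i - row (σ i)) (fun i => M (σ i) i)
      fun i _ => h _ _
    rwa [Finset.sum_sub_distrib, Equiv.sum_comp σ row] at this
  rcases Int.units_eq_one_or (Equiv.Perm.sign σ) with h2 | h2 <;> rw [h2]
  · simpa using h1
  · simpa using h1

/-- The total degree filtration on `A[y₁,…,y_m]`, where the variables have degree `1` and the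
coefficients carry the degree given by `G`. -/
def extend (G : DegFiltration k A) (m : ℕ) : DegFiltration k (MvPolynomial (Fin m) A) where
  F j :=
    { carrier := {f | ∀ α, coeff α f ∈ G.F (j - α.degree)}
      add_mem' := fun hf hg α => by rw [coeff_add]; exact add_mem (hf α) (hg α)
      zero_mem' := fun α => by simp
      smul_mem' := fun c f hf α => by
        rw [coeff_smul]; exact Submodule.smul_mem _ _ (hf α) }
  mono i j hij f hf α := G.mono (by lia) (hf α)
  one_mem α := by
    classical
    rw [coeff_one]
    split_ifs with h
    · subst h; simpa using G.one_mem
    · exact zero_mem _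
  mul_mem {i j f g} hf hg α := by
    classical
    rw [coeff_mul]
    refine Submodule.sum_mem _ fun x hx => ?_
    have h := G.mul_mem (hf x.1) (hg x.2)
    rw [Finset.HasAntidiagonal.mem_antidiagonal] at hx
    rw [← hx, map_add]
    convert h using 2
    push_cast; ring
  eq_zero_of_neg {i f} hi hf := by
    ext α
    exact G.eq_zero_of_neg (by lia) (hf α)

lemma mem_extend (G : DegFiltration k A) {m : ℕ} {j : ℤ} {f : MvPolynomial (Fin m) A} :
    f ∈ (G.extend m).F j ↔ ∀ α, coeff α f ∈ G.F (j - α.degree) := Iff.rfl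

lemma C_mem_extend (G : DegFiltration k A) {m : ℕ} {j : ℤ} {a : A} (ha : a ∈ G.F j) :
    (C a : MvPolynomial (Fin m) A) ∈ (G.extend m).F j := by
  classical
  intro α
  rw [coeff_C]
  split_ifs with h
  · subst h; simpa using ha
  · exact zero_mem _

lemma X_mem_extend (G : DegFiltration k A) {m : ℕ} (i : Fin m) :
    (X i : MvPolynomial (Fin m) A) ∈ (G.extend m).F 1 := by
  classical
  intro α
  rw [coeff_X]
  split_ifs with h
  · subst h; simpa using G.one_mem
  · exact zero_mem _

lemma algebraMap_mem (G : DegFiltration k A) (c : k) : algebraMap k A c ∈ G.F 0 := by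
  rw [Algebra.algebraMap_eq_smul_one]
  exact Submodule.smul_mem _ _ G.one_mem

/-- A ring homomorphism out of `A[y₁,…,y_m]` respects the filtrations as soon as it does so on
constants and on variables. -/
lemma map_mem_of_extend {m : ℕ} (G : DegFiltration k A) {B : Type*} [CommRing B] [Algebra k B]
    (H : DegFiltration k B) (φ : MvPolynomial (Fin m) A →+* B)
    (hC : ∀ j, ∀ a ∈ G.F j, φ (C a) ∈ H.F j) (hX : ∀ i, φ (X i) ∈ H.F 1)
    {j : ℤ} {f : MvPolynomial (Fin m) A} (hf : f ∈ (G.extend m).F j) : φ f ∈ H.F j := by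
  rw [f.as_sum, map_sum]
  refine Submodule.sum_mem _ fun α _ => ?_
  rw [monomial_eq, map_mul, Finsupp.prod_fintype _ _ (by simp), map_prod]
  have h1 := hC _ _ (hf α)
  have h2 := H.prod_mem Finset.univ (fun i => (α i : ℤ)) (fun i => φ (X i ^ α i)) (fun i _ => by
    have := H.pow_mem (hX i) (α i)
    simpa using this)
  have h3 := H.mul_mem h1 h2
  convert h3 using 2
  rw [Finsupp.degree_eq_sum]
  push_cast; ring

lemma coeff_finSuccEquiv_mem (G : DegFiltration k A) {m : ℕ} {j : ℤ}
    {f : MvPolynomial (Fin (m + 1)) A} (hf : f ∈ (G.extend (m + 1)).F j) (i : ℕ) :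
    (finSuccEquiv A m f).coeff i ∈ (G.extend m).F (j - i) := by
  intro α
  rw [finSuccEquiv_coeff_coeff]
  convert hf (α.cons i) using 2
  rw [Finsupp.degree_eq_sum, Finsupp.degree_eq_sum, Fin.sum_univ_succ]
  simp; ring

lemma natDegree_finSuccEquiv_le (G : DegFiltration k A) {m d : ℕ}
    {f : MvPolynomial (Fin (m + 1)) A} (hf : f ∈ (G.extend (m + 1)).F d) :
    (finSuccEquiv A m f).natDegree ≤ d := by
  rw [Polynomial.natDegree_le_iff_coeff_eq_zero]
  intro N hN
  exact (G.extend m).eq_zero_of_neg (by lia) (G.coeff_finSuccEquiv_mem hf N)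

/-- The resultant of two polynomials of total degree at most `d` has degree at most `d ^ 2`, also
when the first one is given any formal degree `e`. -/
lemma resultant_mem (G : DegFiltration k A) (f g : Polynomial A) (d e : ℕ)
    (hf : ∀ i : ℕ, f.coeff i ∈ G.F (d - i)) (hg : ∀ i : ℕ, g.coeff i ∈ G.F (d - i)) :
    Polynomial.resultant f g e d ∈ G.F (d ^ 2 : ℕ) := by
  -- The entry `coeff (i - j)` has degree at most `d + j - i`.
  have h := G.det_mem (Polynomial.sylvester f g e d) (fun i => (i : ℕ))
    (Fin.addCases (fun j => (d + (j : ℕ) : ℤ)) (fun j => (d + (j : ℕ) : ℤ))) (by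
      intro i j
      induction j using Fin.addCases with
      | left j =>
        simp only [Polynomial.sylvester, Matrix.of_apply, Fin.addCases_left]
        split_ifs with h
        · convert hg (i - j) using 2
          rw [Set.mem_Icc] at h
          push_cast [h.1]; ring
        · exact zero_mem _
      | right j =>
        simp only [Polynomial.sylvester, Matrix.of_apply, Fin.addCases_right]
        split_ifs with h
        · convert hf (i - j) using 2
          rw [Set.mem_Icc] at h
          push_cast [h.1]; ring
        · exact zero_mem _)
  have hsum : ∑ j : Fin (e + d), (Fin.addCases (fun j : Fin e => (d + (j : ℕ) : ℤ))
      (fun j : Fin d => (d + (j : ℕ) : ℤ)) j : ℤ) - ∑ i : Fin (e + d), ((i : ℕ) : ℤ)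
      = (d ^ 2 : ℕ) := by
    rw [Fin.sum_univ_add, Fin.sum_univ_add]
    simp only [Fin.addCases_left, Fin.addCases_right, Finset.sum_add_distrib, Fin.val_castAdd,
      Fin.val_natAdd, Nat.cast_add]
    simp
    ring
  rwa [hsum] at h

variable (k A) in
/-- The filtration in which every element has degree at most `0`. -/
def trivial : DegFiltration k A where
  F j := if 0 ≤ j then ⊤ else ⊥
  mono i j hij := by
    dsimp only
    split_ifs <;> first | lia | simp
  one_mem := by simp
  mul_mem {i j a b} ha hb := by
    by_cases hi : 0 ≤ i
    · by_cases hj : 0 ≤ j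
      · simp [add_nonneg hi hj]
      · rw [if_neg hj, Submodule.mem_bot] at hb
        simp [hb]
    · rw [if_neg hi, Submodule.mem_bot] at ha
      simp [ha]
  eq_zero_of_neg {i a} hi ha := by
    rwa [if_neg (by lia), Submodule.mem_bot] at ha

lemma mem_trivial_extend {m d : ℕ} {f : MvPolynomial (Fin m) A} :
    f ∈ ((trivial k A).extend m).F d ↔ f.totalDegree ≤ d := by
  rw [mem_extend, totalDegree, Finset.sup_le_iff]
  change _ ↔ ∀ α ∈ f.support, α.degree ≤ d
  refine forall_congr' fun α => ?_
  simp only [trivial, mem_support_iff]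
  by_cases h : α.degree ≤ d
  · simp [h]
  · simp [h]

end DegFiltration

/-! ### Linear change of variables -/

section change
variable {k A : Type*} [Field k] [CommRing A] [Algebra k A]

/-- The linear change of variables `y₀ ↦ y₀`, `yᵢ ↦ yᵢ + cᵢ y₀` for `i ≥ 1`. -/
noncomputable def shear {m : ℕ} (c : Fin m → k) :
    MvPolynomial (Fin (m + 1)) A →ₐ[A] MvPolynomial (Fin (m + 1)) A :=
  aeval (Fin.cases (X 0) fun i => X i.succ + C (algebraMap k A (c i)) * X 0)

@[simp] lemma shear_X_zero {m : ℕ} (c : Fin m → k) :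
    shear (A := A) c (X 0) = X 0 := by simp [shear]

@[simp] lemma shear_X_succ {m : ℕ} (c : Fin m → k) (i : Fin m) :
    shear (A := A) c (X i.succ) = X i.succ + C (algebraMap k A (c i)) * X 0 := by simp [shear]

lemma shear_neg_shear {m : ℕ} (c : Fin m → k) (f : MvPolynomial (Fin (m + 1)) A) :
    shear (-c) (shear c f) = f := by
  have : (shear (A := A) (-c)).comp (shear c) = AlgHom.id A _ := by
    ext i : 1
    refine Fin.cases ?_ (fun i => ?_) i
    · simp
    · simp [algHom_C]
  exact DFunLike.congr_fun this f

lemma shear_mem (G : DegFiltration k A) {m : ℕ} (c : Fin m → k) {j : ℤ}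
    {f : MvPolynomial (Fin (m + 1)) A} (hf : f ∈ (G.extend (m + 1)).F j) :
    shear c f ∈ (G.extend (m + 1)).F j := by
  refine G.map_mem_of_extend (G.extend (m + 1)) (shear c).toRingHom ?_ ?_ hf
  · intro j a ha
    simpa [algHom_C] using G.C_mem_extend ha
  · intro i
    refine Fin.cases ?_ (fun i => ?_) i
    · simpa using G.X_mem_extend 0
    · have h1 := G.X_mem_extend i.succ
      have h2 := (G.extend (m + 1)).mul_mem
        (G.C_mem_extend (m := m + 1) (G.algebraMap_mem (c i))) (G.X_mem_extend 0)
      simpa using add_mem h1 (by simpa using h2)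

end change

section normal

variable {k A : Type*} [Field k] [CommRing A] [Algebra k A]

/-- The coefficient of `T ^ e` in `f(T v)` is the value at `v` of the degree `e` part of `f`. -/
lemma coeff_eval₂_line {σ : Type*} (v : σ → A) (f : MvPolynomial σ A) (e : ℕ) :
    (eval₂Hom Polynomial.C (fun i => Polynomial.C (v i) * Polynomial.X) f).coeff e =
      eval v (homogeneousComponent e f) := by
  induction f using MvPolynomial.induction_on' with
  | add p q hp hq => simp only [map_add, Polynomial.coeff_add, hp, hq]
  | monomial α a =>
    rw [homogeneousComponent_of_mem (n := α.degree) (isHomogeneous_monomial a rfl)]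
    have : eval₂Hom Polynomial.C (fun i => Polynomial.C (v i) * Polynomial.X) (monomial α a) =
        Polynomial.C (eval v (monomial α a)) * Polynomial.X ^ α.degree := by
      simp only [coe_eval₂Hom, eval₂_monomial, eval_monomial, mul_pow, map_mul,
        Finsupp.prod, map_prod, map_pow, Finset.prod_pow_eq_pow_sum, Finset.prod_mul_distrib]
      rw [mul_assoc]; rfl
    rw [this, Polynomial.coeff_C_mul_X_pow]
    split_ifs <;> simp

lemma eval_smul_of_isHomogeneous {σ : Type*} {e : ℕ} {h : MvPolynomial σ A}
    (hh : h.IsHomogeneous e) (r : A) (v : σ → A) : eval (fun i => r * v i) h = r ^ e * eval v h := by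
  rw [eval_eq, eval_eq, Finset.mul_sum]
  refine Finset.sum_congr rfl fun α hα => ?_
  have hdeg : ∑ i ∈ α.support, α i = e := by
    have := hh (mem_support_iff.mp hα)
    exact (DFunLike.congr_fun Finsupp.degree_eq_weight_one α).trans this
  simp only [mul_pow, Finset.prod_mul_distrib, Finset.prod_pow_eq_pow_sum, hdeg]
  ring

/-- Over an infinite field, a suitable shear turns the leading coefficient in `y₀` of a given
nonzero polynomial into a nonzero constant: that coefficient is the value at `(1, c)` of the
homogeneous part of top degree. -/
lemma exists_shear [Infinite k] [IsDomain A] {m : ℕ} {f : MvPolynomial (Fin (m + 1)) A}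
    (hf : f ≠ 0) : ∃ (c : Fin m → k) (a : A), a ≠ 0 ∧
      (finSuccEquiv A m (shear c f)).leadingCoeff = C a := by
  set e := f.totalDegree with he
  set h := homogeneousComponent e f with hh
  have hhom : h.IsHomogeneous e := homogeneousComponent_isHomogeneous e f
  have hh0 : h ≠ 0 := by
    obtain ⟨α, hα, hα'⟩ := f.support.exists_mem_eq_sup (support_nonempty.mpr hf)
      fun α => α.sum fun _ n => n
    intro h0
    have h1 : coeff α h = coeff α f := by
      rw [hh, coeff_homogeneousComponent, if_pos]
      exact hα'.symm
    rw [h0, coeff_zero] at h1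
    exact mem_support_iff.mp hα h1.symm
  -- The factor `X 0` keeps the point off the hyperplane `y₀ = 0`, so it can be scaled to `(1, c)`.
  obtain ⟨v, hv⟩ : ∃ v : Fin (m + 1) → k, eval (fun i => algebraMap k A (v i)) (X 0 * h) ≠ 0 := by
    by_contra! hcon
    refine mul_ne_zero (X_ne_zero (0 : Fin (m + 1))) hh0 ?_
    refine funext_set (fun _ => Set.range (algebraMap k A))
      (fun _ => Set.infinite_range_of_injective (algebraMap k A).injective) fun x hx => ?_
    choose w hw using fun i => hx i (Set.mem_univ i)
    obtain rfl : (fun i => algebraMap k A (w i)) = x := _root_.funext hw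
    simpa using hcon w
  rw [map_mul, eval_X] at hv
  have hv0 : v 0 ≠ 0 := fun h0 => hv (by simp [h0])
  set c : Fin m → k := fun i => (v 0)⁻¹ * v i.succ with hc
  set w : Fin (m + 1) → A := Fin.cases 1 fun i => algebraMap k A (c i) with hw
  have hwv : (fun i => algebraMap k A (v 0) * w i) = fun i => algebraMap k A (v i) := by
    funext i
    refine Fin.cases ?_ (fun i => ?_) i
    · simp [hw]
    · simp [hw, hc, ← map_mul, hv0]
  have hwh : eval w h ≠ 0 := by
    intro h0
    apply right_ne_zero_of_mul hv
    rw [← hwv, eval_smul_of_isHomogeneous hhom, h0, mul_zero]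
  set P := finSuccEquiv A m (shear c f) with hP
  have hmem : shear c f ∈ ((DegFiltration.trivial k A).extend (m + 1)).F e :=
    shear_mem _ c (DegFiltration.mem_trivial_extend.mpr le_rfl)
  have hmap : P.map constantCoeff =
      eval₂Hom Polynomial.C (fun i => Polynomial.C (w i) * Polynomial.X) f := by
    have : ((Polynomial.mapRingHom constantCoeff).comp
        ((finSuccEquiv A m).toRingEquiv.toRingHom.comp (shear c).toRingHom)) =
        eval₂Hom Polynomial.C (fun i => Polynomial.C (w i) * Polynomial.X) := by
      refine MvPolynomial.ringHom_ext (fun a => ?_) (fun i => ?_)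
      · simp [algHom_C, finSuccEquiv_apply]
      · refine Fin.cases ?_ (fun i => ?_) i
        · simp [hw, finSuccEquiv_apply]
        · simp [hw, finSuccEquiv_apply]
    exact DFunLike.congr_fun this f
  have hcoeff : constantCoeff (P.coeff e) = eval w h := by
    rw [← Polynomial.coeff_map, hmap, coeff_eval₂_line]
  have hdeg : P.natDegree = e := by
    refine le_antisymm (DegFiltration.natDegree_finSuccEquiv_le _ hmem) ?_
    refine Polynomial.le_natDegree_of_ne_zero fun h0 => hwh ?_
    rw [← hcoeff, h0, map_zero]
  refine ⟨c, eval w h, hwh, ?_⟩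
  have h0 := DegFiltration.coeff_finSuccEquiv_mem _ hmem e
  rw [sub_self, ← Nat.cast_zero, DegFiltration.mem_trivial_extend, Nat.le_zero,
    totalDegree_eq_zero_iff_eq_C] at h0
  rw [Polynomial.leadingCoeff, hdeg, h0, ← hcoeff, constantCoeff_eq]

end normal

/-! ### Elimination by resultants -/

section elim

variable {k A : Type*} [Field k] [CommRing A] [Algebra k A]

lemma exists_common_root {L : Type*} [Field L] [IsAlgClosed L] {f g : Polynomial L} {d : ℕ}
    (hf : f ≠ 0) (hg : g.natDegree ≤ d) (h : Polynomial.resultant f g f.natDegree d = 0) :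
    ∃ x ∈ f.roots, g.eval x = 0 := by
  rw [Polynomial.resultant_eq_prod_eval f g d hg (IsAlgClosed.splits f)] at h
  have h2 := (mul_eq_zero.mp h).resolve_left
    (pow_ne_zero _ (Polynomial.leadingCoeff_ne_zero.mpr hf))
  simpa [Multiset.prod_eq_zero_iff] using h2

/-- One elimination step: if `J` is generated by a `k`-subspace `V` and contains a nonzero
constant, then so does the ideal generated by the resultants of `f` with the elements of `V`,
provided the leading coefficient of `f` in the eliminated variable is a nonzero constant. -/
lemma exists_ne_zero_C_mem_span_resultant [Infinite k] {m d : ℕ}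
    [IsDomain A] {J : Ideal (MvPolynomial (Fin (m + 1)) A)}
    (V : Submodule k (MvPolynomial (Fin (m + 1)) A)) (hJ : J = Ideal.span V)
    (hV : ∀ g ∈ V, (finSuccEquiv A m g).natDegree ≤ d)
    {f : MvPolynomial (Fin (m + 1)) A} {a : A} (ha : a ≠ 0)
    (hlead : (finSuccEquiv A m f).leadingCoeff = C a)
    (hex : ∃ p : A, p ≠ 0 ∧ C p ∈ J) :
    ∃ p : A, p ≠ 0 ∧ C p ∈ Ideal.span ((fun g => Polynomial.resultant (finSuccEquiv A m f)
      (finSuccEquiv A m g) (finSuccEquiv A m f).natDegree d) '' (V : Set _)) := by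
  set J' := Ideal.span ((fun g => Polynomial.resultant (finSuccEquiv A m f)
      (finSuccEquiv A m g) (finSuccEquiv A m f).natDegree d) '' (V : Set _)) with hJ'
  classical
  by_contra! hcon
  obtain ⟨Q, hQ, hJQ, hdisj⟩ := Ideal.exists_le_prime_disjoint J'
    ((nonZeroDivisors A).map (C : A →+* MvPolynomial (Fin m) A)) (by
      rw [Set.disjoint_left]
      rintro _ hx ⟨p, hp, rfl⟩
      exact hcon p (nonZeroDivisors.ne_zero hp) hx)
  let L := AlgebraicClosure (FractionRing (MvPolynomial (Fin m) A ⧸ Q))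
  let ψ : MvPolynomial (Fin m) A →+* L :=
    ((algebraMap (FractionRing (MvPolynomial (Fin m) A ⧸ Q)) L).comp
      (algebraMap (MvPolynomial (Fin m) A ⧸ Q) _)).comp (Ideal.Quotient.mk Q)
  have hψ : ∀ x, ψ x = 0 ↔ x ∈ Q := by
    intro x
    simp only [ψ, RingHom.comp_apply]
    rw [map_eq_zero_iff _ (algebraMap (FractionRing (MvPolynomial (Fin m) A ⧸ Q)) L).injective,
      map_eq_zero_iff _ (IsFractionRing.injective (MvPolynomial (Fin m) A ⧸ Q) _),
      Ideal.Quotient.eq_zero_iff_mem]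
  have hψC : ∀ p : A, p ≠ 0 → ψ (C p) ≠ 0 := by
    intro p hp h0
    exact Set.disjoint_left.mp hdisj ((hψ _).mp h0) ⟨p, mem_nonZeroDivisors_of_ne_zero hp, rfl⟩
  set P := finSuccEquiv A m f with hP
  have hPdeg : (P.map ψ).natDegree = P.natDegree :=
    Polynomial.natDegree_map_of_leadingCoeff_ne_zero ψ (by rw [hlead]; exact hψC a ha)
  have hP0 : P.map ψ ≠ 0 := by
    intro h0
    apply hψC a ha
    rw [← hlead, Polynomial.leadingCoeff, ← Polynomial.coeff_map, h0, Polynomial.coeff_zero]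
  let χ : L → MvPolynomial (Fin (m + 1)) A →+* L := fun x =>
    ((Polynomial.evalRingHom x).comp (Polynomial.mapRingHom ψ)).comp
      (finSuccEquiv A m).toRingEquiv.toRingHom
  have hχ : ∀ x g, χ x g = ((finSuccEquiv A m g).map ψ).eval x := fun x g => rfl
  have hroot : ∀ g ∈ V, ∃ x ∈ (P.map ψ).roots.toFinset, χ x g = 0 := by
    intro g hg
    have h1 : Polynomial.resultant (P.map ψ) ((finSuccEquiv A m g).map ψ)
        (P.map ψ).natDegree d = 0 := by
      rw [hPdeg, Polynomial.resultant_map_map, hψ]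
      exact hJQ (Ideal.subset_span ⟨g, hg, rfl⟩)
    obtain ⟨x, hx, hx'⟩ := exists_common_root hP0
      (Polynomial.natDegree_map_le.trans (hV g hg)) h1
    exact ⟨x, by simpa using hx, hx'⟩
  let W : L → Submodule k V := fun x =>
    ((RingHom.ker (χ x)).restrictScalars k).comap V.subtype
  -- A vector space over an infinite field is not a finite union of proper subspaces.
  obtain ⟨x, hx⟩ : ∃ x, V ≤ (RingHom.ker (χ x)).restrictScalars k := by
    have htop := Subspace.top_mem_of_biUnion_eq_univ (k := k)
      (s := (P.map ψ).roots.toFinset.image W) (by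
        rw [Set.eq_univ_iff_forall]
        rintro ⟨g, hg⟩
        obtain ⟨x, hx, hx'⟩ := hroot g hg
        refine Set.mem_biUnion (Finset.mem_image_of_mem W hx) ?_
        exact hx')
    obtain ⟨x, -, hx⟩ := Finset.mem_image.mp htop
    refine ⟨x, fun g hg => ?_⟩
    have : (⟨g, hg⟩ : V) ∈ W x := hx ▸ Submodule.mem_top
    exact this
  obtain ⟨p, hp, hpJ⟩ := hex
  have hker : J ≤ RingHom.ker (χ x) := by
    rw [hJ, Ideal.span_le]
    exact hx
  apply hψC p hp
  have h1 : χ x (C p) = 0 := hker hpJ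
  rw [hχ] at h1
  simpa [finSuccEquiv_apply] using h1

/-- An ideal of `A[y₁,…,y_m]` generated in degree at most `d` that contains a nonzero constant
contains one of degree at most `d ^ 2 ^ m`. -/
theorem exists_bounded_constant [Infinite k] [IsDomain A] (G : DegFiltration k A) (m : ℕ) :
    ∀ (d : ℕ) (_ : 1 ≤ d) (J : Ideal (MvPolynomial (Fin m) A)) (S : Set (MvPolynomial (Fin m) A))
      (_ : J = Ideal.span S) (_ : ∀ g ∈ S, g ∈ (G.extend m).F d)
      (_ : ∃ p : A, p ≠ 0 ∧ C p ∈ J),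
      ∃ q : A, q ≠ 0 ∧ q ∈ G.F (d ^ 2 ^ m : ℕ) ∧ C q ∈ J := by
  induction m with
  | zero =>
    rintro d - J S rfl hS ⟨p, hp, hpJ⟩
    obtain ⟨g, hg, hg0⟩ : ∃ g ∈ S, g ≠ 0 := by
      by_contra! hcon
      rw [Ideal.span_eq_bot.mpr hcon, Ideal.mem_bot, C_eq_zero] at hpJ
      exact hp hpJ
    have hgC := eq_C_of_isEmpty g
    refine ⟨coeff 0 g, ?_, ?_, ?_⟩
    · intro h0
      rw [h0, C_0] at hgC
      exact hg0 hgC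
    · simpa using hS g hg 0
    · rw [← hgC]; exact Ideal.subset_span hg
  | succ m ih =>
    rintro d hd J S rfl hS ⟨p, hp, hpJ⟩
    obtain ⟨f, hf, hf0⟩ : ∃ f ∈ S, f ≠ 0 := by
      by_contra! hcon
      rw [Ideal.span_eq_bot.mpr hcon, Ideal.mem_bot, C_eq_zero] at hpJ
      exact hp hpJ
    obtain ⟨c, a, ha, hlead⟩ := exists_shear (k := k) hf0
    set T := shear (A := A) c '' S with hT
    set V := Submodule.span k T with hV
    have hVF : V ≤ (G.extend (m + 1)).F d := by
      rw [hV, Submodule.span_le]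
      rintro _ ⟨g, hg, rfl⟩
      exact shear_mem G c (hS g hg)
    have hVJ : Ideal.span T = Ideal.span (V : Set (MvPolynomial (Fin (m + 1)) A)) := by
      refine le_antisymm (Ideal.span_mono Submodule.subset_span) (Ideal.span_le.mpr ?_)
      have : V ≤ (Ideal.span T).restrictScalars k :=
        Submodule.span_le.mpr Ideal.subset_span
      exact this
    have hfV : shear c f ∈ V := Submodule.subset_span ⟨f, hf, rfl⟩
    have hmap : Ideal.map (shear (A := A) c) (Ideal.span S) = Ideal.span T := Ideal.map_span _ _
    have hpT : C p ∈ Ideal.span T := by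
      have := Ideal.mem_map_of_mem (shear (A := A) c) hpJ
      rwa [algHom_C, hmap] at this
    have helim := exists_ne_zero_C_mem_span_resultant V rfl
      (fun g hg => G.natDegree_finSuccEquiv_le (hVF hg)) ha hlead ⟨p, hp, hVJ ▸ hpT⟩
    obtain ⟨q, hq0, hqF, hq⟩ := ih (d ^ 2) (Nat.one_le_pow _ _ hd) _ _ rfl (by
      rintro _ ⟨g, hg, rfl⟩
      exact (G.extend m).resultant_mem _ _ d _ (G.coeff_finSuccEquiv_mem (hVF hfV))
        (G.coeff_finSuccEquiv_mem (hVF hg))) helim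
    refine ⟨q, hq0, by rwa [← pow_mul, ← pow_succ'] at hqF, ?_⟩
    -- Resultants lie in the ideal generated by their two arguments.
    have hle : Ideal.span ((fun g => Polynomial.resultant (finSuccEquiv A m (shear c f))
        (finSuccEquiv A m g) (finSuccEquiv A m (shear c f)).natDegree d) '' (V : Set _)) ≤
        ((Ideal.span T).comap ((finSuccEquiv A m).symm : _ →+* _)).comap Polynomial.C := by
      rw [Ideal.span_le]
      rintro _ ⟨g, hg, rfl⟩
      obtain ⟨u, v, -, -, huv⟩ := Polynomial.exists_mul_add_mul_eq_C_resultant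
        (finSuccEquiv A m (shear c f)) (finSuccEquiv A m g) le_rfl
        (G.natDegree_finSuccEquiv_le (hVF hg)) (Or.inr (by lia))
      simp only [SetLike.mem_coe, Ideal.mem_comap]
      rw [← huv, hVJ]
      simp only [RingHom.coe_coe, map_add, map_mul, AlgEquiv.symm_apply_apply]
      exact add_mem (Ideal.mul_mem_right _ _ (Ideal.subset_span hfV))
        (Ideal.mul_mem_right _ _ (Ideal.subset_span hg))
    have hqT : C q ∈ Ideal.span T := by
      have h1 := hle hq
      simp only [Ideal.mem_comap] at h1
      convert h1
      rw [RingHom.coe_coe, AlgEquiv.eq_symm_apply]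
      simp [finSuccEquiv_apply]
    have h2 := Ideal.mem_map_of_mem (shear (A := A) (-c)) hqT
    rw [algHom_C, Ideal.map_span, hT, ← Set.image_comp] at h2
    have h3 : (shear (A := A) (-c)) ∘ (shear c) = id := _root_.funext (shear_neg_shear c)
    rwa [h3, Set.image_id] at h2

end elim

/-! ### Reduction to the elimination problem -/

section final

variable {k : Type*} [Field k]

/-- The substitution `xᵢ ↦ xᵢ` for `i < r`, `Y ↦ u`, where `Y` is the last variable. -/
noncomputable abbrev substLast {n r : ℕ} (hr : r ≤ n) (u : MvPolynomial (Fin n) k) :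
    Fin (r + 1) → MvPolynomial (Fin n) k := fun i =>
  if h : (i : ℕ) < r then X ⟨(i : ℕ), lt_of_lt_of_le h hr⟩ else u

/-- The sharper bound `d ^ 2 ^ (n - r)` over an infinite field. -/
theorem bounded_of_infinite [Infinite k] {n d r : ℕ} (hd : 1 ≤ d) (hr : r ≤ n)
    (S : Set (MvPolynomial (Fin n) k))
    (hdeg : ∀ g ∈ S, g.totalDegree ≤ d)
    (u : MvPolynomial (Fin n) k) (hu : u.totalDegree ≤ d)
    (hex : ∃ p : MvPolynomial (Fin (r + 1)) k, p ≠ 0 ∧ aeval (substLast hr u) p ∈ Ideal.span S) :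
    ∃ q : MvPolynomial (Fin (r + 1)) k, q ≠ 0 ∧ q.totalDegree ≤ d ^ 2 ^ (n - r) ∧
      aeval (substLast hr u) q ∈ Ideal.span S := by
  let θ : MvPolynomial (Fin n) k →ₐ[k]
      MvPolynomial (Fin (n - r)) (MvPolynomial (Fin (r + 1)) k) := aeval fun i =>
    if h : (i : ℕ) < r then C (X ⟨i, by lia⟩) else X ⟨i - r, by lia⟩
  let ε : MvPolynomial (Fin (n - r)) (MvPolynomial (Fin (r + 1)) k) →ₐ[k]
      MvPolynomial (Fin n) k :=
    aevalTower (aeval (substLast hr u)) fun j => X ⟨r + j, by lia⟩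
  have hεC : ∀ q, ε (C q) = aeval (substLast hr u) q := fun q => by simp [ε]
  have hεθ : ∀ g, ε (θ g) = g := by
    have : ε.comp θ = AlgHom.id k _ := by
      ext i : 1
      by_cases h : (i : ℕ) < r
      · simp [θ, ε, h, substLast]
      · simp only [θ, ε, AlgHom.comp_apply, aeval_X, h, dite_false, aevalTower_X, AlgHom.id_apply]
        congr 1; ext; simp only; lia
    exact fun g => DFunLike.congr_fun this g
  let Y : MvPolynomial (Fin (n - r)) (MvPolynomial (Fin (r + 1)) k) := C (X (Fin.last r))
  set T : Set (MvPolynomial (Fin (n - r)) (MvPolynomial (Fin (r + 1)) k)) := insert (Y - θ u) (θ '' S) with hT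
  have hST : Ideal.map θ (Ideal.span S) ≤ Ideal.span T := by
    rw [Ideal.map_span]
    exact Ideal.span_mono (Set.subset_insert _ _)
  have hTS : Ideal.map ε (Ideal.span T) ≤ Ideal.span S := by
    rw [Ideal.map_span, Ideal.span_le]
    rintro _ ⟨_, rfl | ⟨g, hg, rfl⟩, rfl⟩
    · rw [map_sub, hεθ, hεC]
      simp [substLast]
    · rw [hεθ]; exact Ideal.subset_span hg
  let G := (DegFiltration.trivial k k).extend (r + 1)
  have hθF : ∀ g : MvPolynomial (Fin n) k, g.totalDegree ≤ d → θ g ∈ (G.extend (n - r)).F d := by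
    intro g hg
    rw [← DegFiltration.mem_trivial_extend (k := k)] at hg
    refine (DegFiltration.trivial k k).map_mem_of_extend (G.extend (n - r)) θ.toRingHom
      ?_ ?_ hg
    · intro j a ha
      have := G.C_mem_extend (m := n - r) ((DegFiltration.trivial k k).C_mem_extend
        (m := r + 1) ha)
      simpa [algHom_C] using this
    · intro i
      by_cases h : (i : ℕ) < r
      · simpa [θ, h] using G.C_mem_extend ((DegFiltration.trivial k k).X_mem_extend _)
      · simpa [θ, h] using G.X_mem_extend _
  have hpT : ∃ p : MvPolynomial (Fin (r + 1)) k, p ≠ 0 ∧ C p ∈ Ideal.span T := by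
    obtain ⟨p, hp, hpS⟩ := hex
    refine ⟨p, hp, ?_⟩
    have h1 : θ (aeval (substLast hr u) p) ∈ Ideal.span T := hST (Ideal.mem_map_of_mem θ hpS)
    -- Modulo `Y - θ u`, substituting `u` for `Y` changes nothing.
    have h2 : ((Ideal.Quotient.mkₐ k (Ideal.span T)).comp (θ.comp (aeval (substLast hr u)))) =
        (Ideal.Quotient.mkₐ k (Ideal.span T)).comp (Algebra.ofId _ (MvPolynomial (Fin (n - r)) (MvPolynomial (Fin (r + 1)) k)) |>.restrictScalars k) := by
      ext i : 1
      by_cases h : (i : ℕ) < r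
      · simp [θ, h, substLast, Algebra.ofId_apply, algebraMap_eq]
      · obtain rfl : i = Fin.last r := by ext; simp; lia
        simp only [AlgHom.comp_apply, aeval_X, substLast, Fin.val_last, lt_irrefl, dite_false]
        refine (Ideal.Quotient.eq.mpr ?_).symm
        exact Ideal.subset_span (Set.mem_insert _ _)
    have h3 := DFunLike.congr_fun h2 p
    have h4 := Ideal.Quotient.eq.mp h3
    have h5 := sub_mem h1 h4
    simpa [Algebra.ofId_apply] using h5
  obtain ⟨q, hq0, hqF, hq⟩ := exists_bounded_constant G (n - r) d hd _ T rfl (by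
    rintro _ (rfl | ⟨g, hg, rfl⟩)
    · refine sub_mem ((G.extend (n - r)).mono (show (1 : ℤ) ≤ d by lia) ?_) (hθF u hu)
      exact G.C_mem_extend ((DegFiltration.trivial k k).X_mem_extend _)
    · exact hθF g (hdeg g hg)) hpT
  refine ⟨q, hq0, DegFiltration.mem_trivial_extend.mp hqF, ?_⟩
  rw [← hεC]
  exact hTS (Ideal.mem_map_of_mem ε hq)

end final

/-! ### Descent from an extension field -/

section descent

variable {k : Type*} [Field k]

/-- A `k`-linear functional on an extension field `K`, applied to each coefficient of a polynomial
over `K`. -/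
noncomputable def coeffwise {K σ : Type*} [Field K] [Algebra k K] (l : K →ₗ[k] k) :
    MvPolynomial σ K →ₗ[k] MvPolynomial σ k :=
  (basisMonomials σ k).repr.symm.toLinearMap ∘ₗ Finsupp.mapRange.linearMap l ∘ₗ
    ((basisMonomials σ K).repr.toLinearMap.restrictScalars k)

lemma coeff_coeffwise {K σ : Type*} [Field K] [Algebra k K] (l : K →ₗ[k] k)
    (f : MvPolynomial σ K) (α : σ →₀ ℕ) : coeff α (coeffwise l f) = l (coeff α f) := by
  have h := (basisMonomials σ k).repr.apply_symm_apply
    (Finsupp.mapRange.linearMap l ((basisMonomials σ K).repr f))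
  exact DFunLike.congr_fun h α

lemma coeffwise_smul_map {K σ : Type*} [Field K] [Algebra k K] (l : K →ₗ[k] k) (c : K)
    (g : MvPolynomial σ k) : coeffwise l (c • map (algebraMap k K) g) = l c • g := by
  ext α
  rw [coeff_coeffwise, coeff_smul, coeff_map, coeff_smul, smul_eq_mul, mul_comm,
    ← Algebra.smul_def, map_smul, smul_eq_mul, smul_eq_mul, mul_comm]

lemma coeffwise_mem {K σ : Type*} [Field K] [Algebra k K] (l : K →ₗ[k] k)
    {S : Set (MvPolynomial σ k)} {f : MvPolynomial σ K}
    (hf : f ∈ Ideal.span (map (algebraMap k K) '' S)) : coeffwise l f ∈ Ideal.span S := by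
  suffices h : ∀ a : MvPolynomial σ K, coeffwise l (a * f) ∈ Ideal.span S by simpa using h 1
  induction hf using Submodule.span_induction with
  | mem x hx =>
    obtain ⟨g, hg, rfl⟩ := hx
    intro a
    induction a using MvPolynomial.induction_on' with
    | add p q hp hq => rw [add_mul, map_add]; exact add_mem hp hq
    | monomial α c =>
      have h1 : monomial α c * map (algebraMap k K) g =
          c • map (algebraMap k K) (monomial α 1 * g) := by
        rw [map_mul, map_monomial, map_one, ← smul_mul_assoc, smul_monomial, smul_eq_mul, mul_one]
      rw [h1, coeffwise_smul_map]
      exact Submodule.smul_of_tower_mem _ _ (Ideal.mul_mem_left _ _ (Ideal.subset_span hg))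
  | zero => simp
  | add x y _ _ hx hy => intro a; rw [mul_add, map_add]; exact add_mem (hx a) (hy a)
  | smul b x _ hx => intro a; rw [smul_eq_mul, ← mul_assoc]; exact hx _

lemma aeval_map_map {K σ τ : Type*} [Field K] [Algebra k K] (s : σ → MvPolynomial τ k)
    (p : MvPolynomial σ k) : aeval (fun i => map (algebraMap k K) (s i)) (map (algebraMap k K) p) =
      map (algebraMap k K) (aeval s p) := by
  induction p using MvPolynomial.induction_on with
  | C a => simp [algHom_C]
  | add p q hp hq => simp only [map_add, hp, hq]
  | mul_X p i hp => simp only [map_mul, hp, map_X, aeval_X]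

lemma coeffwise_aeval {K σ τ : Type*} [Field K] [Algebra k K] (l : K →ₗ[k] k)
    (s : σ → MvPolynomial τ k) (q : MvPolynomial σ K) :
    coeffwise l (aeval (fun i => map (algebraMap k K) (s i)) q) = aeval s (coeffwise l q) := by
  induction q using MvPolynomial.induction_on' with
  | add p q hp hq => simp only [map_add, hp, hq]
  | monomial α c =>
    have h1 : monomial α c = c • map (algebraMap k K) (monomial α 1) := by
      rw [map_monomial, map_one, smul_monomial, smul_eq_mul, mul_one]
    rw [h1, map_smul, aeval_map_map, coeffwise_smul_map, coeffwise_smul_map, map_smul]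

/-- An annihilating polynomial over an extension field `K` can be replaced by one over `k` without
raising its degree. -/
lemma exists_descent {K σ τ : Type*} [Field K] [Algebra k K] (s : σ → MvPolynomial τ k)
    (S : Set (MvPolynomial τ k)) {q : MvPolynomial σ K} (hq : q ≠ 0)
    (hqS : aeval (fun i => map (algebraMap k K) (s i)) q ∈
      Ideal.span (map (algebraMap k K) '' S)) :
    ∃ q' : MvPolynomial σ k, q' ≠ 0 ∧ q'.totalDegree ≤ q.totalDegree ∧
      aeval s q' ∈ Ideal.span S := by
  -- A functional nonzero on some coefficient of `q` keeps `coeffwise l q` nonzero.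
  obtain ⟨α, hα⟩ := ne_zero_iff.mp hq
  obtain ⟨l, hl⟩ := Module.Projective.exists_dual_ne_zero k hα
  refine ⟨coeffwise l q, ne_zero_iff.mpr ⟨α, by rwa [coeff_coeffwise]⟩, ?_, ?_⟩
  · refine Finset.sup_mono fun β hβ => ?_
    rw [mem_support_iff, coeff_coeffwise] at hβ
    exact mem_support_iff.mpr fun h0 => hβ (by rw [h0, map_zero])
  · rw [← coeffwise_aeval]
    exact coeffwise_mem l hqS

lemma map_aeval_mem {K σ τ : Type*} [Field K] [Algebra k K] (s : σ → MvPolynomial τ k)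
    (S : Set (MvPolynomial τ k)) {p : MvPolynomial σ k} (hpS : aeval s p ∈ Ideal.span S) :
    aeval (fun i => map (algebraMap k K) (s i)) (map (algebraMap k K) p) ∈
      Ideal.span (map (algebraMap k K) '' S) := by
  rw [aeval_map_map, ← Ideal.map_span]
  exact Ideal.mem_map_of_mem _ hpS

lemma substLast_map {K : Type*} [Field K] [Algebra k K] {n r : ℕ} (hr : r ≤ n)
    (u : MvPolynomial (Fin n) k) : substLast hr (map (algebraMap k K) u) =
      fun i => map (algebraMap k K) (substLast hr u i) := by
  funext i
  simp only [substLast]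
  split_ifs <;> simp

/-- The bound over `k` follows from the bound over an infinite extension field `K`. -/
theorem bounded_of_infinite_extension (K : Type*) [Field K] [Infinite K] [Algebra k K] {n d r : ℕ}
    (hd : 1 ≤ d) (hr : r ≤ n) (S : Set (MvPolynomial (Fin n) k))
    (hdeg : ∀ g ∈ S, g.totalDegree ≤ d)
    (u : MvPolynomial (Fin n) k) (hu : u.totalDegree ≤ d)
    (hex : ∃ p : MvPolynomial (Fin (r + 1)) k, p ≠ 0 ∧ aeval (substLast hr u) p ∈ Ideal.span S) :
    ∃ q : MvPolynomial (Fin (r + 1)) k, q ≠ 0 ∧ q.totalDegree ≤ d ^ 2 ^ (n - r) ∧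
      aeval (substLast hr u) q ∈ Ideal.span S := by
  have hle : ∀ g : MvPolynomial (Fin n) k, g.totalDegree ≤ d →
      (map (algebraMap k K) g).totalDegree ≤ d :=
    fun g hg => (Finset.sup_mono (support_map_subset _ _)).trans hg
  have hdeg' : ∀ g ∈ map (algebraMap k K) '' S, g.totalDegree ≤ d := by
    rintro _ ⟨g, hg, rfl⟩
    exact hle g (hdeg g hg)
  have hex' : ∃ p : MvPolynomial (Fin (r + 1)) K, p ≠ 0 ∧
      aeval (substLast hr (map (algebraMap k K) u)) p ∈
        Ideal.span (map (algebraMap k K) '' S) := by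
    obtain ⟨p, hp, hpS⟩ := hex
    refine ⟨map (algebraMap k K) p,
      (map_ne_zero_iff _ (map_injective _ (algebraMap k K).injective)).mpr hp, ?_⟩
    rw [substLast_map]
    exact map_aeval_mem _ S hpS
  obtain ⟨q, hq, hqd, hqS⟩ := bounded_of_infinite (k := K) hd hr (map (algebraMap k K) '' S) hdeg'
    (map (algebraMap k K) u) (hle u hu) hex'
  rw [substLast_map] at hqS
  obtain ⟨q', hq', hqd', hqS'⟩ := exists_descent (substLast hr u) S hq hqS
  exact ⟨q', hq', hqd'.trans hqd, hqS'⟩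

end descent

/-- If some nonzero polynomial `p ∈ k[x₁,…,x_r][Y]` vanishes at `u`
modulo `I` (i.e. `p(u) ∈ I`), then some nonzero `q ∈ k[x₁,…,x_r][Y]` of total degree at
most `2·d^(2^(n+1))` satisfies `q(u) ∈ I`.  Here `k[x₁,…,x_r][Y]` is modelled as
`MvPolynomial (Fin (r+1)) k` with the last variable playing the role of `Y`, and
substitution sends `xᵢ ↦ xᵢ` and `Y ↦ u`. -/
theorem bounded_annihilating_polynomial
    (k : Type*) [Field k] (n d r : ℕ) (hn : 1 ≤ n) (hd : 1 ≤ d) (hr : r ≤ n)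
    (I : Ideal (MvPolynomial (Fin n) k))
    (S : Set (MvPolynomial (Fin n) k)) (hgen : I = Ideal.span S)
    (hdeg : ∀ g ∈ S, g.totalDegree ≤ d)
    (u : MvPolynomial (Fin n) k) (hu : u.totalDegree ≤ d)
    (hex : ∃ p : MvPolynomial (Fin (r + 1)) k, p ≠ 0 ∧
      MvPolynomial.aeval (fun i : Fin (r + 1) =>
        if h : (i : ℕ) < r then (MvPolynomial.X ⟨(i : ℕ), lt_of_lt_of_le h hr⟩ :
          MvPolynomial (Fin n) k) else u) p ∈ I) :
    ∃ q : MvPolynomial (Fin (r + 1)) k, q ≠ 0 ∧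
      q.totalDegree ≤ 2 * d ^ 2 ^ (n + 1) ∧
      MvPolynomial.aeval (fun i : Fin (r + 1) =>
        if h : (i : ℕ) < r then (MvPolynomial.X ⟨(i : ℕ), lt_of_lt_of_le h hr⟩ :
          MvPolynomial (Fin n) k) else u) q ∈ I := by
  subst hgen
  obtain ⟨q, hq, hqd, hqS⟩ :=
    bounded_of_infinite_extension (AlgebraicClosure k) hd hr S hdeg u hu hex
  have h2 : d ^ 2 ^ (n - r) ≤ d ^ 2 ^ (n + 1) :=
    Nat.pow_le_pow_right hd (Nat.pow_le_pow_right two_pos (by lia))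
  exact ⟨q, hq, by lia, hqS⟩
end
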